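/- Multilinear mixed (ℓ_{p/(p−1)}, ℓ₂)-Littlewood inequality: let M ≥ 3 be an integer and p ∈ [2, ∞) a real number. For every n ∈ ℕ and every M-linear form T : ℝⁿ × ℝⁿ × ⋯ × ℝⁿ → ℝ one has (∑_{i₁=1}^{n} (∑_{i₂,…,i_M=1}^{n} |T(e_{i₁},…,e_{i_M})|²)^{(1/2)·(p/(p−1))})^{(p−1)/p} ≤ (A_{p/(p−1)})^{M−1} · ‖T‖, where ‖T‖ := sup{|T(x^{(1)},…,x^{(M)})| : ‖x^{(1)}‖_{ℓ_p} ≤ 1 and ‖x^{(k)}‖_{ℓ_∞} ≤ 1 for k = 2,…,M}. -/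

import Mathlib

open MeasureTheory Real Filter

/-- The `j`-th Rademacher function, `r_j(t) = sgn(sin(2^j π t))`. -/
noncomputable def rademacher (j : ℕ) (t : ℝ) : ℝ :=
  Real.sign (Real.sin ((2 : ℝ) ^ j * Real.pi * t))

/-- `p₀ ∈ (1,2)` is the unique solution of `Γ((p₀+1)/2) = √π / 2`. -/
noncomputable def khintchineP0 : ℝ :=
  sInf {p : ℝ | 1 < p ∧ p < 2 ∧ Real.Gamma ((p + 1) / 2) = Real.sqrt Real.pi / 2}

/-- The optimal constant `A_r` in the Khintchine inequality. -/
noncomputable def khintchineA (r : ℝ) : ℝ :=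
  if r ≤ khintchineP0 then (2 : ℝ) ^ (1 / r - 1 / 2)
  else if r < 2 then
    (1 / Real.sqrt 2) * (Real.Gamma ((r + 1) / 2) / Real.sqrt Real.pi) ^ (-(1 / r))
  else 1

/-- The `ℓ_p` norm of a vector in `ℝⁿ` (for finite `p`). -/
noncomputable def lpNorm (p : ℝ) {n : ℕ} (x : Fin n → ℝ) : ℝ :=
  (∑ i, |x i| ^ p) ^ (1 / p)

/-- The `ℓ_∞` norm of a vector in `ℝⁿ`. -/
noncomputable def linfNorm {n : ℕ} (x : Fin n → ℝ) : ℝ :=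
  ⨆ i, |x i|

/-- The norm of an `(m+1)`-linear form on `ℝᴺ × (ℝⁿ)^m` (encoded as a linear map into
`m`-multilinear maps): `sup{|T(x, y₁, …, y_m)| : ‖x‖_{ℓ_p} ≤ 1, ‖y_k‖_{ℓ_∞} ≤ 1}`. -/
noncomputable def multiOpNorm (p : ℝ) {N n m : ℕ}
    (T : (Fin N → ℝ) →ₗ[ℝ] MultilinearMap ℝ (fun _ : Fin m => (Fin n → ℝ)) ℝ) : ℝ :=
  sSup {c : ℝ | ∃ (x : Fin N → ℝ) (y : Fin m → (Fin n → ℝ)),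
    lpNorm p x ≤ 1 ∧ (∀ k, linfNorm (y k) ≤ 1) ∧ c = |T x y|}

/-!
Let `r = p / (p - 1)` be the conjugate exponent. For vectors in a Hilbert space, the Khintchine
inequality bounds `(∑ ‖v_k‖ ^ 2) ^ (r / 2)` by `A_r ^ r` times the mean of `‖∑ ε_k v_k‖ ^ r`, and
some choice of signs does at least as well as the mean. Choosing signs in one variable after
another replaces each bounded variable by a point of the cube at the cost of a factor `A_r`, and
the duality of `ℓ_r` and `ℓ_p` disposes of the first variable. The Hilbert-valued inequality follows
from the scalar one by Minkowski's inequality in `ℓ_{2/r}` if `r < 2`, and from Jensen's inequality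
if `2 ≤ r`.

The sharp scalar inequality for `p₀ ≤ r < 2` is Haagerup's theorem, proved after Nazarov and
Podkorytov. Since `|x| ^ r` is a multiple of `∫ (1 - cos (x t)) t ^ (-r - 1) dt` and a Rademacher
sum has characteristic function `∏ cos (a_k t)`, the AM-GM inequality with weights `a_k ^ 2` of sum
`1` reduces the claim to comparing `∫ (1 - |cos (t / √s)| ^ s) t ^ (-r - 1) dt`, where
`s = 1 / a_k ^ 2`, with its Gaussian limit as `s → ∞`. At `s = 2` this is the condition `p₀ ≤ r`;
it extends to `2 ≤ s` because the distribution functions of `|cos t|` and `exp (-t ^ 2 / 2)` cross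
only once. If some `a_k ^ 2` exceeds `1 / 2`, the bound follows by induction on the number of terms,
once it is strengthened by replacing `(1 + x) ^ (r / 2)` to the left of `x = 1` by its point
reflection. For `r < p₀` one interpolates between `p₀` and `2`.
-/

namespace Khintchine

section RademacherAverages

variable {E F : Type*} [AddCommGroup E] [AddCommGroup F]

/-- The Rademacher average of `f`: the mean of `f (x + ∑ ε_k v_k)` over all choices of signs `ε_k`,
where the `v_k` are the entries of the list. The base point `x` makes the recursion possible. -/
noncomputable def radAvg (f : E → ℝ) : List E → E → ℝ
  | [], x => f x
  | v :: l, x => (radAvg f l (x + v) + radAvg f l (x - v)) / 2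

theorem radAvg_mono {f g : E → ℝ} (h : ∀ x, f x ≤ g x) (l : List E) (x : E) :
    radAvg f l x ≤ radAvg g l x := by
  induction l generalizing x with
  | nil => exact h x
  | cons v l ih => simp only [radAvg]; linarith [ih (x + v), ih (x - v)]

theorem radAvg_add (f g : E → ℝ) (l : List E) (x : E) :
    radAvg (fun y => f y + g y) l x = radAvg f l x + radAvg g l x := by
  induction l generalizing x with
  | nil => rfl
  | cons v l ih => simp only [radAvg, ih]; ring

theorem radAvg_const_mul (c : ℝ) (f : E → ℝ) (l : List E) (x : E) :
    radAvg (fun y => c * f y) l x = c * radAvg f l x := by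
  induction l generalizing x with
  | nil => rfl
  | cons v l ih => simp only [radAvg, ih]; ring

theorem radAvg_const (c : ℝ) (l : List E) (x : E) : radAvg (fun _ => c) l x = c := by
  induction l generalizing x with
  | nil => rfl
  | cons v l ih => simp only [radAvg, ih]; ring

theorem radAvg_nonneg {f : E → ℝ} (hf : ∀ x, 0 ≤ f x) (l : List E) (x : E) : 0 ≤ radAvg f l x :=
  (radAvg_const 0 l x).ge.trans (radAvg_mono hf l x)

theorem radAvg_sum {ι : Type*} (s : Finset ι) (f : ι → E → ℝ) (l : List E) (x : E) :
    radAvg (fun y => ∑ i ∈ s, f i y) l x = ∑ i ∈ s, radAvg (f i) l x := by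
  induction l generalizing x with
  | nil => rfl
  | cons v l ih => simp only [radAvg, ih, ← Finset.sum_add_distrib, Finset.sum_div]

theorem radAvg_comp (φ : E →+ F) (f : F → ℝ) (l : List E) (x : E) :
    radAvg (fun y => f (φ y)) l x = radAvg f (l.map φ) (φ x) := by
  induction l generalizing x with
  | nil => rfl
  | cons v l ih => simp only [radAvg, ih, List.map_cons, map_add, map_sub]

theorem radAvg_eval_ofFn {κ : Type*} {n : ℕ} (a : κ) (f : E → ℝ) (c : Fin n → κ → E) :
    radAvg (fun x => f (x a)) (List.ofFn c) 0 = radAvg f (List.ofFn fun i => c i a) 0 := by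
  have h := radAvg_comp (Pi.evalAddMonoidHom (fun _ => E) a) f (List.ofFn c) 0
  rwa [List.map_ofFn] at h

theorem map_radAvg_le {ι : Type*} {N : (ι → ℝ) → ℝ}
    (hN : ∀ u v : ι → ℝ, N (fun j => (u j + v j) / 2) ≤ (N u + N v) / 2)
    (g : ι → E → ℝ) (l : List E) (x : E) :
    N (fun j => radAvg (g j) l x) ≤ radAvg (fun y => N fun j => g j y) l x := by
  induction l generalizing x with
  | nil => exact le_rfl
  | cons v l ih => exact (hN _ _).trans (by simp only [radAvg]; linarith [ih (x + v), ih (x - v)])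

theorem radAvg_perm (f : E → ℝ) {l l' : List E} (h : l.Perm l') (x : E) :
    radAvg f l x = radAvg f l' x := by
  induction h generalizing x with
  | nil => rfl
  | cons v _ ih => simp only [radAvg, ih]
  | swap v w l =>
    simp only [radAvg]
    rw [add_right_comm x w v, show x + w - v = x - v + w by abel,
      show x - w + v = x + v - w by abel, show x - w - v = x - v - w by abel]
    ring
  | trans _ _ ih₁ ih₂ => rw [ih₁, ih₂]

theorem radAvg_neg {f : E → ℝ} (hf : ∀ x, f (-x) = f x) (l : List E) (x : E) :
    radAvg f l (-x) = radAvg f l x := by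
  induction l generalizing x with
  | nil => exact hf x
  | cons v l ih =>
    simp only [radAvg]
    rw [← ih (-x + v), ← ih (-x - v), show -(-x + v) = x - v by abel,
      show -(-x - v) = x + v by abel, add_comm]

theorem radAvg_cons_zero {f : E → ℝ} (hf : ∀ x, f (-x) = f x) (v : E) (l : List E) :
    radAvg f (v :: l) 0 = radAvg f l v := by
  simp only [radAvg, zero_add, zero_sub, radAvg_neg hf, add_self_div_two]

theorem radAvg_cons_cons (f : E → ℝ) (v w : E) (l : List E) (x : E) :
    radAvg f (v :: w :: l) x
      = (radAvg f ((v + w) :: l) x + radAvg f ((v - w) :: l) x) / 2 := by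
  simp only [radAvg]
  rw [show x + v + w = x + (v + w) by abel, show x + v - w = x + (v - w) by abel,
    show x - v + w = x - (v - w) by abel, show x - v - w = x - (v + w) by abel]
  ring

theorem exists_signs_radAvg_le (f : E → ℝ) {n : ℕ} (v : Fin n → E) (x : E) :
    ∃ ε : Fin n → ℤ, (∀ i, ε i = 1 ∨ ε i = -1) ∧
      radAvg f (List.ofFn v) x ≤ f (x + ∑ i, ε i • v i) := by
  induction n generalizing x with
  | zero => exact ⟨Fin.elim0, fun i => i.elim0, by simp [radAvg]⟩
  | succ n ih =>
    suffices ∃ s : ℤ, (s = 1 ∨ s = -1) ∧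
        radAvg f (List.ofFn v) x ≤ radAvg f (List.ofFn fun i => v i.succ) (x + s • v 0) by
      obtain ⟨s, hs, hle⟩ := this
      obtain ⟨ε, hε, hle'⟩ := ih (fun i => v i.succ) (x + s • v 0)
      refine ⟨Fin.cons s ε, Fin.cases hs hε, hle.trans (hle'.trans_eq ?_)⟩
      simp only [Fin.sum_univ_succ, Fin.cons_zero, Fin.cons_succ, add_assoc]
    simp only [List.ofFn_succ, radAvg]
    rcases le_total (radAvg f (List.ofFn fun i => v i.succ) (x + v 0))
      (radAvg f (List.ofFn fun i => v i.succ) (x - v 0)) with h | h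
    · exact ⟨-1, Or.inr rfl, by rw [neg_one_smul, ← sub_eq_add_neg]; linarith⟩
    · exact ⟨1, Or.inl rfl, by rw [one_smul]; linarith⟩

end RademacherAverages

section Moments

/-- The `p`-th absolute moment of the Rademacher sum `x + ∑ ε_k a_k`, the right-hand side of the
Khintchine inequality. -/
noncomputable def radMoment (p : ℝ) (l : List ℝ) (x : ℝ) : ℝ := radAvg (fun s => |s| ^ p) l x

/-- The squared Euclidean norm of a vector, encoded as the list of its entries. -/
noncomputable def sumSq (l : List ℝ) : ℝ := (l.map (· ^ 2)).sum

theorem sumSq_nil : sumSq [] = 0 := rfl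

theorem sumSq_cons (a : ℝ) (l : List ℝ) : sumSq (a :: l) = a ^ 2 + sumSq l := by
  simp only [sumSq, List.map_cons, List.sum_cons]

theorem sumSq_ofFn {n : ℕ} (c : Fin n → ℝ) : sumSq (List.ofFn c) = ∑ i, c i ^ 2 := by
  rw [sumSq, List.map_ofFn, List.sum_ofFn]; rfl

theorem sumSq_eq_sum_getElem (l : List ℝ) : sumSq l = ∑ i : Fin l.length, l[i.1] ^ 2 :=
  (Fin.sum_univ_fun_getElem l (· ^ 2)).symm

theorem sumSq_nonneg (l : List ℝ) : 0 ≤ sumSq l :=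
  List.sum_nonneg <| List.forall_mem_map.2 fun a _ => sq_nonneg a

theorem sumSq_perm {l l' : List ℝ} (h : l.Perm l') : sumSq l = sumSq l' :=
  (h.map _).sum_eq

theorem sumSq_map_mul (c : ℝ) (l : List ℝ) : sumSq (l.map (c * ·)) = c ^ 2 * sumSq l := by
  simp only [sumSq, List.map_map, Function.comp_def, mul_pow, List.sum_map_mul_left]

theorem map_mul_map_inv_mul {c : ℝ} (hc : c ≠ 0) (l : List ℝ) :
    (l.map (c⁻¹ * ·)).map (c * ·) = l := by
  simp only [List.map_map, Function.comp_def, mul_inv_cancel_left₀ hc, List.map_id']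

theorem radMoment_nonneg (p : ℝ) (l : List ℝ) (x : ℝ) : 0 ≤ radMoment p l x :=
  radAvg_nonneg (fun _ => by positivity) l x

theorem radMoment_map_mul (p c : ℝ) (l : List ℝ) (x : ℝ) :
    radMoment p (l.map (c * ·)) (c * x) = |c| ^ p * radMoment p l x := by
  rw [radMoment, radMoment, ← radAvg_const_mul]
  have h := radAvg_comp (AddMonoidHom.mulLeft c) (fun s : ℝ => |s| ^ p) l x
  simp only [AddMonoidHom.coe_mulLeft] at h
  simp only [← h, abs_mul, mul_rpow (abs_nonneg _) (abs_nonneg _)]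

theorem radMoment_cons_zero (p a : ℝ) (l : List ℝ) :
    radMoment p (a :: l) 0 = radMoment p l a :=
  radAvg_cons_zero (fun x => by rw [abs_neg]) a l

theorem radAvg_sq (l : List ℝ) (x : ℝ) :
    radAvg (fun s : ℝ => s ^ 2) l x = x ^ 2 + sumSq l := by
  induction l generalizing x with
  | nil => rw [radAvg, sumSq_nil, add_zero]
  | cons a l ih => simp only [radAvg, ih, sumSq_cons]; ring

theorem radAvg_cos (t : ℝ) (l : List ℝ) (x : ℝ) :
    radAvg (fun s => cos (s * t)) l x = cos (x * t) * (l.map fun a => cos (a * t)).prod := by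
  induction l generalizing x with
  | nil => simp only [radAvg, List.map_nil, List.prod_nil, mul_one]
  | cons a l ih =>
    simp only [radAvg, ih, List.map_cons, List.prod_cons, add_mul, sub_mul, cos_add, cos_sub]
    ring

theorem sq_rpow_half (t p : ℝ) : (t ^ 2) ^ (p / 2) = |t| ^ p := by
  rw [rpow_div_two_eq_sqrt p (sq_nonneg t), sqrt_sq_eq_abs]

theorem mul_rpow_sumSq_le_radMoment_of_map {p C c : ℝ} (hc : c ≠ 0) {l : List ℝ}
    (h : C * sumSq (l.map (c⁻¹ * ·)) ^ (p / 2) ≤ radMoment p (l.map (c⁻¹ * ·)) 0) :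
    C * sumSq l ^ (p / 2) ≤ radMoment p l 0 := by
  have hl : l = (l.map (c⁻¹ * ·)).map (c * ·) := (map_mul_map_inv_mul hc l).symm
  have hmoment := radMoment_map_mul p c (l.map (c⁻¹ * ·)) 0
  rw [mul_zero] at hmoment
  rw [hl, sumSq_map_mul, mul_rpow (sq_nonneg c) (sumSq_nonneg _), sq_rpow_half, hmoment,
    mul_left_comm]
  gcongr

theorem mul_rpow_sumSq_le_radMoment_of_normalized {p C ρ : ℝ} (hp : 0 < p) (hρ : 0 < ρ)
    {l : List ℝ} (h : ∀ c, sumSq (l.map (c * ·)) = ρ →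
      C * ρ ^ (p / 2) ≤ radMoment p (l.map (c * ·)) 0) :
    C * sumSq l ^ (p / 2) ≤ radMoment p l 0 := by
  rcases (sumSq_nonneg l).eq_or_lt with h0 | h0
  · rw [← h0, zero_rpow (by positivity), mul_zero]
    exact radMoment_nonneg p l 0
  · have hnorm : sumSq (l.map ((√(sumSq l / ρ))⁻¹ * ·)) = ρ := by
      rw [sumSq_map_mul, inv_pow, sq_sqrt (by positivity)]
      field_simp
    refine mul_rpow_sumSq_le_radMoment_of_map (c := √(sumSq l / ρ)) (by positivity) ?_
    rw [hnorm]
    exact h _ hnorm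

end Moments

section SymmetrizedPower

theorem map_add_map_le_of_concaveOn {s : Set ℝ} {f : ℝ → ℝ} (hf : ConcaveOn ℝ s f) {a b c d : ℝ}
    (ha : a ∈ s) (hd : d ∈ s) (hab : a ≤ b) (hbd : b ≤ d) (h : a + d = b + c) :
    f a + f d ≤ f b + f c := by
  rcases (hab.trans hbd).eq_or_lt with rfl | had
  · obtain rfl : a = b := le_antisymm hab hbd
    obtain rfl : a = c := by linarith
    rfl
  have hd0 : d - a ≠ 0 := by linarith
  have hu : 0 ≤ (d - b) / (d - a) := div_nonneg (by linarith) (by linarith)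
  have hv : 0 ≤ (b - a) / (d - a) := div_nonneg (by linarith) (by linarith)
  have huv : (d - b) / (d - a) + (b - a) / (d - a) = 1 := by field_simp; ring
  have hb := hf.2 ha hd hu hv huv
  have hc := hf.2 ha hd hv hu ((add_comm _ _).trans huv)
  have eb : (d - b) / (d - a) * a + (b - a) / (d - a) * d = b := by field_simp; ring
  have ec : (b - a) / (d - a) * a + (d - b) / (d - a) * d = c := by
    rw [show c = a + d - b by linarith]; field_simp; ring
  simp only [smul_eq_mul, eb, ec] at hb hc
  linear_combination hb + hc - (f a + f d) * huv

theorem rpow_add_rpow_le_of_add_eq {q a b c d : ℝ} (hq0 : 0 ≤ q) (hq1 : q ≤ 1) (ha : 0 ≤ a)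
    (hab : a ≤ b) (hbd : b ≤ d) (h : a + d = b + c) : a ^ q + d ^ q ≤ b ^ q + c ^ q :=
  map_add_map_le_of_concaveOn (Real.concaveOn_rpow hq0 hq1) ha (ha.trans (hab.trans hbd)) hab hbd h

/-- The function `x ↦ (1 + x) ^ (p / 2)` on `[1, ∞)`, continued to the left of `1` so that its graph
is symmetric about the point `(1, 2 ^ (p / 2))`. Unlike `(1 + x) ^ (p / 2)`, it is convex to the
left of `1`, which lets the lower bound `C * symPow p (sumSq l) ≤ radMoment p l 1` be proved by
induction on `l`. -/
noncomputable def symPow (p x : ℝ) : ℝ :=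
  if 1 ≤ x then (1 + x) ^ (p / 2) else 2 * 2 ^ (p / 2) - (3 - x) ^ (p / 2)

variable {p x : ℝ}

theorem symPow_of_one_le (hx : 1 ≤ x) : symPow p x = (1 + x) ^ (p / 2) := if_pos hx

theorem symPow_of_le_one (hx : x ≤ 1) : symPow p x = 2 * 2 ^ (p / 2) - (3 - x) ^ (p / 2) := by
  rcases hx.eq_or_lt with rfl | hx
  · rw [symPow_of_one_le le_rfl]; norm_num; ring
  · exact if_neg hx.not_ge

theorem rpow_le_symPow (hp0 : 0 ≤ p) (hp2 : p ≤ 2) (hx : -1 ≤ x) :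
    (1 + x) ^ (p / 2) ≤ symPow p x := by
  rcases le_total 1 x with h | h
  · rw [symPow_of_one_le h]
  · rw [symPow_of_le_one h]
    have := rpow_add_rpow_le_of_add_eq (q := p / 2) (a := 1 + x) (b := 2) (c := 2) (d := 3 - x)
      (by linarith) (by linarith) (by linarith) (by linarith) (by linarith) (by ring)
    linarith

theorem symPow_nonneg (hp0 : 0 ≤ p) (hp2 : p ≤ 2) (hx : -1 ≤ x) : 0 ≤ symPow p x :=
  (rpow_nonneg (by linarith) _).trans (rpow_le_symPow hp0 hp2 hx)

theorem two_mul_symPow_le_of_nonneg (hp0 : 0 ≤ p) (hp2 : p ≤ 2) (hx1 : x ≤ 1) {h : ℝ}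
    (hh : 0 ≤ h) : 2 * symPow p x ≤ symPow p (x + h) + symPow p (x - h) := by
  have hq0 : 0 ≤ p / 2 := by linarith
  have hq1 : p / 2 ≤ 1 := by linarith
  rw [symPow_of_le_one hx1, symPow_of_le_one (by linarith : x - h ≤ 1)]
  rcases le_total (x + h) 1 with h1 | h1
  · rw [symPow_of_le_one h1]
    have := rpow_add_rpow_le_of_add_eq (a := 3 - (x + h)) (b := 3 - x) (c := 3 - x)
      (d := 3 - (x - h)) hq0 hq1 (by linarith) (by linarith) (by linarith) (by ring)
    linarith
  · rw [symPow_of_one_le h1]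
    have hsplit := rpow_add_rpow_le_of_add_eq (a := 2) (b := 1 + (x + h)) (c := 2 + 2 * (1 - x))
      (d := 3 - (x - h)) hq0 hq1 (by norm_num) (by linarith) (by linarith) (by ring)
    have hmid := rpow_add_rpow_le_of_add_eq (a := 2) (b := 3 - x) (c := 3 - x)
      (d := 2 + 2 * (1 - x)) hq0 hq1 (by norm_num) (by linarith) (by linarith) (by ring)
    linarith

theorem two_mul_symPow_le (hp0 : 0 ≤ p) (hp2 : p ≤ 2) (hx1 : x ≤ 1) (h : ℝ) :
    2 * symPow p x ≤ symPow p (x + h) + symPow p (x - h) := by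
  rcases le_total 0 h with h0 | h0
  · exact two_mul_symPow_le_of_nonneg hp0 hp2 hx1 h0
  · have := two_mul_symPow_le_of_nonneg hp0 hp2 hx1 (neg_nonneg.2 h0)
    rwa [sub_neg_eq_add, ← sub_eq_add_neg, add_comm (symPow _ _)] at this

end SymmetrizedPower

section BalancedReduction

variable {p C : ℝ}

theorem mul_symPow_le_radMoment_of_sumSq_le_one (hp0 : 0 ≤ p) (hp2 : p ≤ 2) (hC : 0 ≤ C)
    (hbase : ∀ a : ℝ, a ^ 2 ≤ 1 → C * symPow p (a ^ 2) ≤ radMoment p [a] 1) {n : ℕ}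
    (ih : ∀ l : List ℝ, l.length < n → C * symPow p (sumSq l) ≤ radMoment p l 1)
    {l : List ℝ} (hl : l.length ≤ n) (h1 : sumSq l ≤ 1) :
    C * symPow p (sumSq l) ≤ radMoment p l 1 := by
  match l, hl, h1 with
  | [], _, _ => simpa [radMoment, radAvg, sumSq] using hbase 0 (by norm_num)
  | [a], _, h1 => simpa [sumSq] using hbase a (by simpa [sumSq] using h1)
  | a :: b :: l', hl, h1 =>
    have hplus := ih ((a + b) :: l') (by simpa using hl)
    have hminus := ih ((a - b) :: l') (by simpa using hl)
    have hmid := two_mul_symPow_le hp0 hp2 h1 (2 * a * b)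
    rw [show sumSq (a :: b :: l') + 2 * a * b = sumSq ((a + b) :: l') by
        simp only [sumSq_cons]; ring,
      show sumSq (a :: b :: l') - 2 * a * b = sumSq ((a - b) :: l') by
        simp only [sumSq_cons]; ring] at hmid
    rw [radMoment, radAvg_cons_cons]
    change _ ≤ (radMoment p ((a + b) :: l') 1 + radMoment p ((a - b) :: l') 1) / 2
    linarith [mul_le_mul_of_nonneg_left hmid hC]

theorem mul_rpow_sumSq_cons_le_radMoment (hp0 : 0 ≤ p) (hp2 : p ≤ 2) (hC : 0 ≤ C) {b : ℝ}
    (hb : b ≠ 0) {l : List ℝ}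
    (h : C * symPow p (sumSq (l.map (b⁻¹ * ·))) ≤ radMoment p (l.map (b⁻¹ * ·)) 1) :
    C * sumSq (b :: l) ^ (p / 2) ≤ radMoment p (b :: l) 0 := by
  refine mul_rpow_sumSq_le_radMoment_of_map hb ?_
  rw [List.map_cons, inv_mul_cancel₀ hb, sumSq_cons, one_pow, radMoment_cons_zero]
  refine le_trans ?_ h
  gcongr
  exact rpow_le_symPow hp0 hp2 (by linarith [sumSq_nonneg (l.map (b⁻¹ * ·))])

theorem exists_perm_cons_cons_of_unbalanced {l : List ℝ} (h1 : 1 ≤ sumSq l) {b : ℝ}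
    (hb : b ∈ 1 :: l) (hlt : sumSq (1 :: l) < 2 * b ^ 2) :
    b ≠ 0 ∧ ∃ l' : List ℝ, l'.length + 1 = l.length ∧ (1 :: l).Perm (b :: 1 :: l') ∧
      sumSq ((1 :: l').map (b⁻¹ * ·)) ≤ 1 := by
  have hb2 : 0 < b ^ 2 := by linarith [sumSq_nonneg (1 :: l)]
  have hbl : b ∈ l := by
    refine (List.mem_cons.1 hb).resolve_left ?_
    rintro rfl
    rw [sumSq_cons] at hlt
    linarith
  have hperm : (1 :: l).Perm (b :: 1 :: l.erase b) :=
    ((List.perm_cons_erase hbl).cons 1).trans (List.Perm.swap _ _ _)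
  refine ⟨by rintro rfl; norm_num at hb2, l.erase b, List.length_erase_add_one hbl, hperm, ?_⟩
  rw [sumSq_perm hperm, sumSq_cons] at hlt
  rw [sumSq_map_mul, inv_pow, inv_mul_le_iff₀ hb2]
  linarith

theorem mul_symPow_le_radMoment (hp0 : 0 ≤ p) (hp2 : p ≤ 2) (hC : 0 ≤ C)
    (hbase : ∀ a : ℝ, a ^ 2 ≤ 1 → C * symPow p (a ^ 2) ≤ radMoment p [a] 1)
    (hbal : ∀ l : List ℝ, (∀ a ∈ l, 2 * a ^ 2 ≤ sumSq l) →
      C * sumSq l ^ (p / 2) ≤ radMoment p l 0) (l : List ℝ) :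
    C * symPow p (sumSq l) ≤ radMoment p l 1 := by
  induction hn : l.length using Nat.strong_induction_on generalizing l with
  | _ n ih =>
  have hsmall := fun l => mul_symPow_le_radMoment_of_sumSq_le_one hp0 hp2 hC hbase (n := n)
    (fun l hl => ih _ hl l rfl) (l := l)
  rcases le_total (sumSq l) 1 with h1 | h1
  · exact hsmall l hn.le h1
  rw [symPow_of_one_le h1, ← radMoment_cons_zero, ← one_pow 2, ← sumSq_cons, one_pow]
  by_cases hall : ∀ a ∈ 1 :: l, 2 * a ^ 2 ≤ sumSq (1 :: l)
  · exact hbal _ hall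
  push Not at hall
  obtain ⟨b, hb, hlt⟩ := hall
  obtain ⟨hb0, l', hlen, hperm, hle⟩ := exists_perm_cons_cons_of_unbalanced h1 hb hlt
  rw [sumSq_perm hperm, radMoment, radAvg_perm _ hperm]
  exact mul_rpow_sumSq_cons_le_radMoment hp0 hp2 hC hb0
    (hsmall _ (by rw [List.length_map, List.length_cons, hlen, hn]) hle)

theorem mul_rpow_sumSq_le_radMoment (hp0 : 0 ≤ p) (hp2 : p ≤ 2) (hC : 0 ≤ C)
    (hbase : ∀ a : ℝ, a ^ 2 ≤ 1 → C * symPow p (a ^ 2) ≤ radMoment p [a] 1)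
    (hbal : ∀ l : List ℝ, (∀ a ∈ l, 2 * a ^ 2 ≤ sumSq l) →
      C * sumSq l ^ (p / 2) ≤ radMoment p l 0) (l : List ℝ) :
    C * sumSq l ^ (p / 2) ≤ radMoment p l 0 := by
  induction l with
  | nil => exact hbal [] (List.forall_mem_nil _)
  | cons a l ih =>
    rcases eq_or_ne a 0 with rfl | ha
    · rwa [radMoment_cons_zero, sumSq_cons, zero_pow two_ne_zero, zero_add]
    · exact mul_rpow_sumSq_cons_le_radMoment hp0 hp2 hC ha
        (mul_symPow_le_radMoment hp0 hp2 hC hbase hbal _)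

end BalancedReduction

section TwoPoint

theorem log_le_half_sub_inv {x : ℝ} (hx : 1 ≤ x) : log x ≤ (x - x⁻¹) / 2 := by
  rw [← Real.sinh_log (by linarith)]
  exact Real.self_le_sinh_iff.2 (log_nonneg hx)

theorem log_le_two_mul_div {x : ℝ} (hx0 : 0 < x) (hx1 : x ≤ 1) :
    log x ≤ 2 * (x - 1) / (x + 1) := by
  have h := Real.le_log_one_add_of_nonneg (sub_nonneg.2 ((one_le_inv₀ hx0).2 hx1))
  rw [add_sub_cancel, log_inv] at h
  have e : 2 * (x⁻¹ - 1) / (x⁻¹ - 1 + 2) = -(2 * (x - 1) / (x + 1)) := by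
    rw [show x⁻¹ - 1 + 2 = (x + 1) / x by field_simp; ring]
    field_simp
    ring
  linarith

theorem half_add_mul_log_le {w : ℝ} (hw : 0 ≤ w) :
    (1 / 2 + w) * log (1 + 2 * w) ≤ w * (1 + w) := by
  calc (1 / 2 + w) * log (1 + 2 * w)
      ≤ (1 / 2 + w) * ((1 + 2 * w - (1 + 2 * w)⁻¹) / 2) := by
        gcongr; exact log_le_half_sub_inv (by linarith)
    _ = w * (1 + w) := by field_simp; ring

theorem one_sub_sq_mul_log_le {b : ℝ} (hb0 : 0 ≤ b) (hb1 : b < 1) :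
    (1 - b) ^ 2 * log (1 - b) ≤ (1 - b) ^ 2 * (-(2 * b) / (2 - b)) := by
  gcongr
  refine (log_le_two_mul_div (by linarith) (by linarith)).trans_eq ?_
  ring_nf

theorem sq_mul_log_le {b : ℝ} (hb0 : 0 < b) (hb1 : b ≤ 1 / 2) :
    b ^ 2 * log b ≤ b ^ 2 * (2 * (2 * b - 1) / (2 * b + 1) - 0.6931) := by
  gcongr
  have h := log_le_two_mul_div (x := 2 * b) (by linarith) (by linarith)
  rw [log_mul two_ne_zero hb0.ne'] at h
  linarith [log_two_gt_d9]

theorem entropy_bound_nonpos {b : ℝ} (hb0 : 0 ≤ b) (hb1 : b ≤ 1 / 2) :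
    (1 - b) ^ 2 * (-(2 * b) / (2 - b)) + b ^ 2 * (2 * (2 * b - 1) / (2 * b + 1) - 0.6931)
      + (1 - b) * b * (1 + (1 - b) * b) ≤ 0 := by
  have h2b : 0 < 2 - b := by linarith
  have e : (1 - b) ^ 2 * (-(2 * b) / (2 - b)) + b ^ 2 * (2 * (2 * b - 1) / (2 * b + 1) - 0.6931)
        + (1 - b) * b * (1 + (1 - b) * b)
      = b ^ 2 * ((1 - b) * (2 * b + 1) * (3 - 3 * b + b ^ 2)
        + (2 - b) * (-2.6931 + 2.6138 * b)) / ((2 - b) * (2 * b + 1)) := by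
    field_simp
    ring
  have hb : 0 ≤ 1 / 2 - b := by linarith
  rw [e]
  refine div_nonpos_of_nonpos_of_nonneg
    (mul_nonpos_of_nonneg_of_nonpos (sq_nonneg b) ?_) (by positivity)
  nlinarith [mul_nonneg hb0 hb, mul_nonneg (mul_nonneg hb0 hb0) hb,
    mul_nonneg (mul_nonneg hb0 hb0) (mul_nonneg hb0 hb)]

theorem sq_mul_log_add_nonpos {b : ℝ} (hb0 : 0 < b) (hb1 : b ≤ 1 / 2) :
    (1 - b) ^ 2 * log (1 - b) + b ^ 2 * log b
      + (1 / 2 + (1 - b) * b) * log (1 + 2 * ((1 - b) * b)) ≤ 0 := by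
  have hw : 0 ≤ (1 - b) * b := mul_nonneg (by linarith) hb0.le
  linarith [one_sub_sq_mul_log_le hb0.le (by linarith), sq_mul_log_le hb0 hb1,
    half_add_mul_log_le hw, entropy_bound_nonpos hb0.le hb1]

theorem sq_mul_one_add_mul_log_le_rpow {x : ℝ} (hx : 0 < x) (p : ℝ) :
    x ^ 2 * (1 + (p - 2) * log x) ≤ x ^ p := by
  calc x ^ 2 * (1 + (p - 2) * log x) ≤ x ^ 2 * exp ((p - 2) * log x) := by
        gcongr; linarith [add_one_le_exp ((p - 2) * log x)]
    _ = x ^ p := by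
        rw [mul_comm (p - 2), ← rpow_def_of_pos hx, ← rpow_two, ← rpow_add hx, add_sub_cancel]

-- As a function of `p` the right-hand side is convex and equal to `2` at `p = 2`, with
-- derivative the nonpositive quantity of `sq_mul_log_add_nonpos` there.
theorem two_le_rpow_add_rpow_add_rpow {b p : ℝ} (hb0 : 0 ≤ b) (hb1 : b ≤ 1 / 2) (hp0 : 0 < p)
    (hp2 : p ≤ 2) : 2 ≤ (1 - b) ^ p + b ^ p + (1 + 2 * ((1 - b) * b)) ^ (p / 2) := by
  rcases hb0.eq_or_lt with rfl | hb0
  · rw [zero_rpow hp0.ne']; norm_num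
  have hw : 0 ≤ (1 - b) * b := mul_nonneg (by linarith) hb0.le
  have hg : 0 < 1 + 2 * ((1 - b) * b) := by linarith
  have htangent := sq_mul_one_add_mul_log_le_rpow (sqrt_pos.2 hg) p
  rw [← rpow_div_two_eq_sqrt p hg.le, sq_sqrt hg.le, log_sqrt hg.le] at htangent
  linear_combination sq_mul_one_add_mul_log_le_rpow (x := 1 - b) (by linarith) p
    + sq_mul_one_add_mul_log_le_rpow hb0 p + htangent
    + (2 - p) * sq_mul_log_add_nonpos hb0 hb1

theorem two_mul_rpow_le_rpow_add_rpow_add_mul {a p : ℝ} (ha0 : 0 ≤ a) (ha1 : a ≤ 1) (hp0 : 0 < p)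
    (hp2 : p ≤ 2) :
    2 * 2 ^ p ≤ (1 + a) ^ p + (1 - a) ^ p + 2 ^ (p / 2) * (3 - a ^ 2) ^ (p / 2) := by
  have h := two_le_rpow_add_rpow_add_rpow (b := (1 - a) / 2) (by linarith) (by linarith) hp0 hp2
  have hsplit : (2 : ℝ) ^ p = 2 ^ (p / 2) * 2 ^ (p / 2) := by
    rw [← rpow_add two_pos, add_halves]
  rw [show 1 - (1 - a) / 2 = (1 + a) / 2 by ring,
    show 1 + 2 * ((1 + a) / 2 * ((1 - a) / 2)) = (3 - a ^ 2) / 2 by ring,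
    div_rpow (by linarith) two_pos.le, div_rpow (by linarith) two_pos.le,
    div_rpow (by nlinarith) two_pos.le, hsplit] at h
  rw [hsplit]
  field_simp at h
  linarith

theorem radMoment_singleton_one {a : ℝ} (ha : |a| ≤ 1) (p : ℝ) :
    radMoment p [a] 1 = ((1 + |a|) ^ p + (1 - |a|) ^ p) / 2 := by
  obtain ⟨hal, hau⟩ := abs_le.1 ha
  rw [radMoment, radAvg, radAvg, radAvg, abs_of_nonneg (by linarith : 0 ≤ 1 + a),
    abs_of_nonneg (by linarith : 0 ≤ 1 - a)]
  rcases abs_choice a with h | h <;> rw [h]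
  rw [sub_neg_eq_add, ← sub_eq_add_neg, add_comm]

theorem mul_symPow_le_radMoment_singleton {p C : ℝ} (hp0 : 0 < p) (hp2 : p ≤ 2)
    (hC : C ≤ 2 ^ (p / 2 - 1)) {a : ℝ} (ha : a ^ 2 ≤ 1) :
    C * symPow p (a ^ 2) ≤ radMoment p [a] 1 := by
  have ha1 := (sq_le_one_iff_abs_le_one a).1 ha
  have hsplit : (2 : ℝ) ^ p = 2 ^ (p / 2) * 2 ^ (p / 2) := by
    rw [← rpow_add two_pos, add_halves]
  calc C * symPow p (a ^ 2)
      ≤ 2 ^ (p / 2 - 1) * symPow p (a ^ 2) :=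
        mul_le_mul_of_nonneg_right hC (symPow_nonneg hp0.le hp2 (by linarith [sq_nonneg a]))
    _ = (2 * 2 ^ p - 2 ^ (p / 2) * (3 - |a| ^ 2) ^ (p / 2)) / 2 := by
        rw [symPow_of_le_one ha, rpow_sub_one two_ne_zero, sq_abs, hsplit]; ring
    _ ≤ ((1 + |a|) ^ p + (1 - |a|) ^ p) / 2 := by
        linarith [two_mul_rpow_le_rpow_add_rpow_add_mul (abs_nonneg a) ha1 hp0 hp2]
    _ = radMoment p [a] 1 := (radMoment_singleton_one ha1 p).symm

end TwoPoint

section Gamma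

theorem Gamma_add_natCast {x : ℝ} (hx : 0 < x) (n : ℕ) :
    Gamma (x + n) = Gamma x * ∏ j ∈ Finset.range n, (x + j) := by
  induction n with
  | zero => simp
  | succ n ih =>
    rw [Finset.prod_range_succ, ← mul_assoc, ← ih]
    push_cast
    rw [← add_assoc, Gamma_add_one (by positivity)]
    ring

theorem Gamma_pow_succ_le {s t : ℝ} (hs : 0 < s) (ht : 0 < t) {k : ℕ} (hk : 0 < k) :
    Gamma ((k * s + t) / (k + 1)) ^ (k + 1) ≤ Gamma s ^ k * Gamma t := by
  have h := Gamma_mul_add_mul_le_rpow_Gamma_mul_rpow_Gamma hs ht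
    (a := k / (k + 1)) (b := 1 / (k + 1)) (by positivity) (by positivity) (by field_simp)
  rw [show (k : ℝ) / (k + 1) * s + 1 / (k + 1) * t = (k * s + t) / (k + 1) by field_simp] at h
  refine (pow_le_pow_left₀ (Gamma_pos_of_pos (by positivity)).le h (k + 1)).trans_eq ?_
  rw [mul_pow, ← rpow_mul_natCast (Gamma_pos_of_pos hs).le,
    ← rpow_mul_natCast (Gamma_pos_of_pos ht).le]
  congr 1
  · rw [← rpow_natCast]; congr 1; push_cast; field_simp
  · rw [show 1 / ((k : ℝ) + 1) * ((k + 1 : ℕ) : ℝ) = 1 by push_cast; field_simp, rpow_one]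

theorem Gamma_three_halves : Gamma (3 / 2) = √π / 2 := by
  rw [show (3 / 2 : ℝ) = 1 / 2 + 1 by norm_num, Gamma_add_one (by norm_num), Gamma_one_half_eq]
  ring

theorem sqrt_pi_gt : 1.77245 < √π := by
  apply lt_sqrt_of_sq_lt
  linarith [pi_gt_d6]

-- The shift by `16` makes the log-convexity estimate at `3 / 2 ∈ (11 / 8, 2)` sharp enough.
theorem sqrt_pi_div_two_lt_Gamma_eleven_eighths : √π / 2 < Gamma (11 / 8) := by
  have hconv := Gamma_pow_succ_le (s := 11 / 8 + (16 : ℕ)) (t := 2 + (16 : ℕ)) (by positivity)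
    (by positivity) (k := 4) (by norm_num)
  rw [show ((4 : ℕ) * (11 / 8 + ((16 : ℕ) : ℝ)) + (2 + ((16 : ℕ) : ℝ))) / ((4 : ℕ) + 1)
      = 3 / 2 + (16 : ℕ) by norm_num,
    Gamma_add_natCast (by norm_num), Gamma_add_natCast (by norm_num),
    Gamma_add_natCast (by norm_num), Gamma_three_halves, Gamma_two] at hconv
  simp only [Finset.prod_range_succ, Finset.prod_range_zero] at hconv
  by_contra! hle
  have hpow : Gamma (11 / 8) ^ 4 ≤ (√π / 2) ^ 4 :=
    pow_le_pow_left₀ (Gamma_pos_of_pos (by norm_num)).le hle 4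
  have hpos : 0 < (√π / 2) ^ 4 := by positivity
  rw [show 4 + 1 = 5 from rfl, mul_pow _ _ 5, mul_pow _ _ 4, pow_succ (√π / 2) 4] at hconv
  generalize (√π / 2) ^ 4 = X at *
  generalize Gamma (11 / 8) ^ 4 = Y at *
  norm_num at hconv
  nlinarith [mul_pos hpos (sub_pos.2 sqrt_pi_gt)]

theorem Gamma_fortyseven_thirtyseconds_lt : Gamma (47 / 32) < √π / 2 := by
  have hconv := Gamma_pow_succ_le (s := 3 / 2 + (16 : ℕ)) (t := 1 + (16 : ℕ)) (by positivity)
    (by positivity) (k := 15) (by norm_num)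
  rw [show ((15 : ℕ) * (3 / 2 + ((16 : ℕ) : ℝ)) + (1 + ((16 : ℕ) : ℝ))) / ((15 : ℕ) + 1)
      = 47 / 32 + (16 : ℕ) by norm_num,
    Gamma_add_natCast (by norm_num), Gamma_add_natCast (by norm_num),
    Gamma_add_natCast (by norm_num), Gamma_three_halves, Gamma_one] at hconv
  simp only [Finset.prod_range_succ, Finset.prod_range_zero] at hconv
  by_contra! hle
  have hpow : (√π / 2) ^ 15 * (√π / 2) ≤ Gamma (47 / 32) ^ 16 := by
    rw [← pow_succ]
    exact pow_le_pow_left₀ (by positivity) hle 16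
  have hpos : 0 < (√π / 2) ^ 15 := by positivity
  rw [show 15 + 1 = 16 from rfl, mul_pow _ _ 16, mul_pow _ _ 15] at hconv
  generalize (√π / 2) ^ 15 = X at *
  generalize Gamma (47 / 32) ^ 16 = Y at *
  norm_num at hconv
  nlinarith [mul_pos hpos (sub_pos.2 sqrt_pi_gt)]

theorem exists_Gamma_eq :
    ∃ p : ℝ, 1 < p ∧ p < 2 ∧ Gamma ((p + 1) / 2) = √π / 2 := by
  have hc : ContinuousOn Gamma (Set.Icc (11 / 8) (47 / 32)) := fun x hx =>
    (convexOn_Gamma.continuousOn isOpen_Ioi).continuousAt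
      (Ioi_mem_nhds (by linarith [hx.1])) |>.continuousWithinAt
  obtain ⟨x, hx, hxe⟩ := intermediate_value_Icc' (by norm_num) hc
    ⟨Gamma_fortyseven_thirtyseconds_lt.le, sqrt_pi_div_two_lt_Gamma_eleven_eighths.le⟩
  refine ⟨2 * x - 1, by linarith [hx.1], by linarith [hx.2], ?_⟩
  rwa [sub_add_cancel, mul_div_cancel_left₀ _ two_ne_zero]

theorem Gamma_le_of_mem_Icc {q r : ℝ} (hq1 : -1 < q)
    (hq : Gamma ((q + 1) / 2) = √π / 2) (hqr : q ≤ r) (hr2 : r ≤ 2) :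
    Gamma ((r + 1) / 2) ≤ √π / 2 := by
  have h := convexOn_Gamma.le_max_of_mem_Icc (x := (q + 1) / 2) (y := 3 / 2)
    (z := (r + 1) / 2) (Set.mem_Ioi.2 (by linarith)) (Set.mem_Ioi.2 (by norm_num))
    ⟨by linarith, by linarith⟩
  rwa [hq, Gamma_three_halves, max_self] at h

theorem seven_quarters_le {q : ℝ} (hq1 : -1 < q)
    (hq : Gamma ((q + 1) / 2) = √π / 2) : 7 / 4 ≤ q := by
  by_contra! h
  have := Gamma_le_of_mem_Icc hq1 hq h.le (by norm_num)
  norm_num at this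
  linarith [sqrt_pi_div_two_lt_Gamma_eleven_eighths]

end Gamma

section PowMeasure

/-- The measure `t ^ (-p - 1) dt` on the positive half-line, against which `1 - cos (s * t)`
integrates to a multiple of `|s| ^ p`. -/
noncomputable def powMeasure (p : ℝ) : Measure ℝ :=
  (volume.restrict (Set.Ioi 0)).withDensity fun t => ENNReal.ofReal (t ^ (-p - 1))

instance (p : ℝ) : SFinite (powMeasure p) := by unfold powMeasure; infer_instance

theorem measurable_powDensity (p : ℝ) :
    Measurable fun t : ℝ => ENNReal.ofReal (t ^ (-p - 1)) := by fun_prop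

theorem integral_powMeasure (p : ℝ) (φ : ℝ → ℝ) :
    ∫ t, φ t ∂powMeasure p = ∫ t in Set.Ioi 0, t ^ (-p - 1) * φ t := by
  rw [powMeasure, integral_withDensity_eq_integral_toReal_smul (measurable_powDensity p)
    (by simp)]
  refine setIntegral_congr_fun measurableSet_Ioi fun t ht => ?_
  have : 0 ≤ t ^ (-p - 1) := rpow_nonneg (le_of_lt ht) _
  simp [ENNReal.toReal_ofReal this]

theorem integrable_powMeasure_iff (p : ℝ) (φ : ℝ → ℝ) :
    Integrable φ (powMeasure p) ↔
      IntegrableOn (fun t => t ^ (-p - 1) * φ t) (Set.Ioi 0) := by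
  rw [powMeasure, integrable_withDensity_iff_integrable_smul' (measurable_powDensity p)
    (by simp)]
  refine integrableOn_congr_fun (fun t ht => ?_) measurableSet_Ioi
  have : 0 ≤ t ^ (-p - 1) := rpow_nonneg (le_of_lt ht) _
  simp [ENNReal.toReal_ofReal this]

theorem powMeasure_ae_pos (p : ℝ) : ∀ᵐ t ∂powMeasure p, 0 < t :=
  (withDensity_absolutelyContinuous _ _).ae_le (ae_restrict_mem measurableSet_Ioi)

theorem powMeasure_Ioi {p a : ℝ} (hp : 0 < p) (ha : 0 < a) :
    powMeasure p (Set.Ioi a) = ENNReal.ofReal (a ^ (-p) / p) := by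
  rw [powMeasure, withDensity_apply _ measurableSet_Ioi,
    Measure.restrict_restrict measurableSet_Ioi,
    Set.inter_eq_left.2 (Set.Ioi_subset_Ioi ha.le),
    ← ofReal_integral_eq_lintegral_ofReal, integral_Ioi_rpow_of_lt (by linarith) ha]
  · rw [show -p - 1 + 1 = -p by ring, neg_div_neg_eq]
  · exact integrableOn_Ioi_rpow_of_lt (by linarith) ha
  · filter_upwards [ae_restrict_mem measurableSet_Ioi] with t ht
    exact rpow_nonneg (ha.le.trans (le_of_lt ht)) _

variable {p : ℝ}

theorem integrable_powMeasure (hp0 : 0 < p) (hp2 : p < 2) {φ : ℝ → ℝ} (hm : Measurable φ)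
    {c d : ℝ} (hφ : ∀ t, |φ t| ≤ c * t ^ 2) (hφd : ∀ t, |φ t| ≤ d) :
    Integrable φ (powMeasure p) := by
  rw [integrable_powMeasure_iff, ← Set.Ioc_union_Ioi_eq_Ioi (zero_le_one' ℝ),
    integrableOn_union]
  have hms : Measurable fun t : ℝ => t ^ (-p - 1) * φ t := by fun_prop
  constructor
  · have h : IntegrableOn (fun t : ℝ => c * t ^ (1 - p)) (Set.Ioc 0 1) := by
      have := intervalIntegral.intervalIntegrable_rpow' (a := 0) (b := 1) (r := 1 - p)
        (by linarith)
      rw [intervalIntegrable_iff_integrableOn_Ioc_of_le zero_le_one] at this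
      exact this.const_mul c
    refine h.mono' hms.aestronglyMeasurable ?_
    filter_upwards [ae_restrict_mem measurableSet_Ioc] with t ht
    have h0 : 0 < t := ht.1
    rw [norm_mul, norm_eq_abs, norm_eq_abs, abs_of_pos (rpow_pos_of_pos h0 _)]
    calc t ^ (-p - 1) * |φ t| ≤ t ^ (-p - 1) * (c * t ^ 2) := by gcongr; exact hφ t
      _ = c * (t ^ (-p - 1) * t ^ (2 : ℝ)) := by rw [rpow_two]; ring
      _ = c * t ^ (1 - p) := by rw [← rpow_add h0]; ring_nf
  · have h : IntegrableOn (fun t : ℝ => d * t ^ (-p - 1)) (Set.Ioi 1) :=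
      (integrableOn_Ioi_rpow_of_lt (by linarith) one_pos).const_mul d
    refine h.mono' hms.aestronglyMeasurable ?_
    filter_upwards [ae_restrict_mem measurableSet_Ioi] with t ht
    have h0 : 0 < t := one_pos.trans ht
    rw [norm_mul, norm_eq_abs, norm_eq_abs, abs_of_pos (rpow_pos_of_pos h0 _), mul_comm]
    gcongr
    exact hφd t

theorem integral_powMeasure_comp_mul (φ : ℝ → ℝ) {s : ℝ} (hs : 0 < s) :
    ∫ t, φ (s * t) ∂powMeasure p = s ^ p * ∫ t, φ t ∂powMeasure p := by
  rw [integral_powMeasure, integral_powMeasure]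
  have hsubst := integral_comp_mul_left_Ioi (fun t => t ^ (-p - 1) * φ t) 0 hs
  rw [mul_zero, smul_eq_mul] at hsubst
  have hfactor : ∫ t in Set.Ioi 0, (s * t) ^ (-p - 1) * φ (s * t)
      = s ^ (-p - 1) * ∫ t in Set.Ioi 0, t ^ (-p - 1) * φ (s * t) := by
    rw [← integral_const_mul]
    refine setIntegral_congr_fun measurableSet_Ioi fun t ht => ?_
    rw [mul_rpow hs.le (le_of_lt ht), mul_assoc]
  rw [hfactor, rpow_sub_one hs.ne', rpow_neg hs.le] at hsubst
  field_simp at hsubst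
  linarith

end PowMeasure

section CosineRepresentation

variable {p : ℝ}

/-- The normalising constant in the integral representation
`|s| ^ p * cosConst p = ∫ t, (1 - cos (s * t)) ∂powMeasure p`, valid for `0 < p < 2`. -/
noncomputable def cosConst (p : ℝ) : ℝ := ∫ t, (1 - cos t) ∂powMeasure p

theorem integrable_one_sub_cos_mul (hp0 : 0 < p) (hp2 : p < 2) (s : ℝ) :
    Integrable (fun t => 1 - cos (s * t)) (powMeasure p) := by
  refine integrable_powMeasure hp0 hp2 (by fun_prop) (c := 1 / 2 * s ^ 2) (d := 2)
    (fun t => ?_) fun t => ?_ <;> rw [abs_of_nonneg (sub_nonneg.2 (cos_le_one _))]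
  · linarith [one_sub_sq_div_two_le_cos (x := s * t), mul_pow s t 2]
  · linarith [neg_one_le_cos (s * t)]

theorem integral_one_sub_cos_mul (hp0 : 0 < p) (s : ℝ) :
    ∫ t, (1 - cos (s * t)) ∂powMeasure p = |s| ^ p * cosConst p := by
  rcases eq_or_ne s 0 with rfl | hs
  · simp [zero_rpow hp0.ne']
  · rw [cosConst, ← integral_powMeasure_comp_mul (fun t => 1 - cos t) (abs_pos.2 hs)]
    rcases abs_choice s with h | h <;> simp [h]

theorem cosConst_pos (hp0 : 0 < p) (hp2 : p < 2) : 0 < cosConst p := by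
  have hi := integrable_one_sub_cos_mul hp0 hp2 1
  simp only [one_mul] at hi
  rw [cosConst, integral_pos_iff_support_of_nonneg (fun t => sub_nonneg.2 (cos_le_one t)) hi]
  have hne : ∀ t ∈ Set.Ioo (0 : ℝ) (2 * π), 1 - cos t ≠ 0 := fun t ht h =>
    ht.1.ne' <| (cos_eq_one_iff_of_lt_of_lt (by linarith [ht.1, pi_pos]) ht.2).1 (by linarith)
  have hsupp : powMeasure p (Set.Ioi 1 \ Set.Ioi 2) ≤
      powMeasure p (Function.support fun t => 1 - cos t) := by
    refine measure_mono fun t ht => hne t ⟨one_pos.trans ht.1, ?_⟩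
    linarith [pi_gt_three, Set.notMem_Ioi.1 ht.2]
  refine lt_of_lt_of_le ?_ (le_measure_sdiff.trans hsupp)
  rw [powMeasure_Ioi hp0 one_pos, powMeasure_Ioi hp0 two_pos, tsub_pos_iff_lt,
    ENNReal.ofReal_lt_ofReal_iff (by positivity)]
  gcongr ?_ / p
  exact rpow_lt_rpow_of_neg one_pos one_lt_two (by linarith)

theorem integrable_one_sub_radAvg_cos (hp0 : 0 < p) (hp2 : p < 2) (l : List ℝ) (x : ℝ) :
    Integrable (fun t => 1 - radAvg (fun s => cos (s * t)) l x) (powMeasure p) := by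
  induction l generalizing x with
  | nil => exact integrable_one_sub_cos_mul hp0 hp2 x
  | cons a l ih =>
    refine (((ih (x + a)).add (ih (x - a))).div_const 2).congr (Eventually.of_forall fun t => ?_)
    simp only [radAvg, Pi.add_apply]
    ring

theorem integral_one_sub_radAvg_cos (hp0 : 0 < p) (hp2 : p < 2) (l : List ℝ) (x : ℝ) :
    ∫ t, (1 - radAvg (fun s => cos (s * t)) l x) ∂powMeasure p
      = radMoment p l x * cosConst p := by
  rw [radMoment]
  induction l generalizing x with
  | nil => exact integral_one_sub_cos_mul hp0 x
  | cons a l ih =>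
    have hstep : (fun t => 1 - radAvg (fun s => cos (s * t)) (a :: l) x)
        = fun t => 1 / 2 * (1 - radAvg (fun s => cos (s * t)) l (x + a))
          + 1 / 2 * (1 - radAvg (fun s => cos (s * t)) l (x - a)) := by
      ext t; simp only [radAvg]; ring
    rw [hstep, integral_add ((integrable_one_sub_radAvg_cos hp0 hp2 _ _).const_mul _)
      ((integrable_one_sub_radAvg_cos hp0 hp2 _ _).const_mul _), integral_const_mul,
      integral_const_mul, ih, ih]
    simp only [radAvg]
    ring

end CosineRepresentation

section GaussianMoment

open ProbabilityTheory

variable {p : ℝ}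

/-- The `p`-th absolute moment of a standard Gaussian variable. -/
noncomputable def gaussMoment (p : ℝ) : ℝ := 2 ^ (p / 2) * Gamma ((p + 1) / 2) / √π

theorem gaussMoment_pos (hp : 0 < p) : 0 < gaussMoment p := by
  have := Gamma_pos_of_pos (show 0 < (p + 1) / 2 by linarith)
  unfold gaussMoment
  positivity

theorem integral_abs_rpow_gaussian (hp : 0 < p) :
    ∫ x, |x| ^ p ∂gaussianReal 0 1 = gaussMoment p := by
  rw [integral_gaussianReal_eq_integral_smul one_ne_zero]
  have hdensity : ∀ x : ℝ, gaussianPDFReal 0 1 x • |x| ^ p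
      = (fun y => (√(2 * π))⁻¹ * (y ^ p * exp (-(1 / 2) * y ^ (2 : ℝ)))) |x| := by
    intro x
    simp only [gaussianPDFReal, smul_eq_mul, rpow_two, sq_abs, NNReal.coe_one, mul_one, sub_zero]
    rw [show -x ^ 2 / 2 = -(1 / 2) * x ^ 2 by ring]
    ring
  simp_rw [hdensity]
  rw [integral_comp_abs (f := fun y => (√(2 * π))⁻¹ * (y ^ p * exp (-(1 / 2) * y ^ (2 : ℝ)))),
    integral_const_mul, integral_rpow_mul_exp_neg_mul_rpow two_pos (by linarith) (by norm_num),
    gaussMoment, sqrt_mul (by norm_num), one_div, inv_rpow (by norm_num), ← rpow_neg (by norm_num),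
    sqrt_eq_rpow 2, show -(-(p + 1) / 2) = p / 2 + 1 / 2 by ring, rpow_add two_pos]
  have : (0 : ℝ) < 2 ^ (1 / 2 : ℝ) := by positivity
  field_simp

theorem integrable_abs_rpow_gaussian (hp : 0 < p) :
    Integrable (fun x => |x| ^ p) (gaussianReal 0 1) := by
  by_contra h
  exact (gaussMoment_pos hp).ne' ((integral_abs_rpow_gaussian hp).symm.trans (integral_undef h))

theorem integrable_cos_mul_gaussian (t : ℝ) :
    Integrable (fun x => cos (x * t)) (gaussianReal 0 1) :=
  Integrable.mono' (integrable_const (1 : ℝ)) (by fun_prop)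
    (Eventually.of_forall fun x => by simpa using abs_cos_le_one _)

theorem integral_cos_mul_gaussian (t : ℝ) :
    ∫ x, cos (x * t) ∂gaussianReal 0 1 = exp (-(t ^ 2 / 2)) := by
  have hi : Integrable (fun x : ℝ => Complex.exp (t * x * Complex.I)) (gaussianReal 0 1) := by
    refine Integrable.mono' (integrable_const (1 : ℝ)) (by fun_prop)
      (Eventually.of_forall fun x => ?_)
    rw [← Complex.ofReal_mul, Complex.norm_exp_ofReal_mul_I]
  have hre := congrArg Complex.re (charFun_gaussianReal (μ := 0) (v := 1) t)
  rw [charFun_apply_real, ← RCLike.re_eq_complex_re, ← integral_re hi] at hre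
  simp only [RCLike.re_eq_complex_re, ← Complex.ofReal_mul, Complex.exp_ofReal_mul_I_re] at hre
  simp_rw [mul_comm _ t]
  rw [hre, show (((t * (0 : ℝ) : ℝ) : ℂ) * Complex.I - ((1 : NNReal) : ℝ) * (t : ℂ) ^ 2 / 2)
    = ((-(t ^ 2 / 2) : ℝ) : ℂ) by push_cast; simp]
  exact Complex.exp_ofReal_re _

theorem exp_neg_sq_div_two_le_one (t : ℝ) : exp (-(t ^ 2 / 2)) ≤ 1 :=
  exp_le_one_iff.2 (neg_nonpos.2 (by positivity))

theorem integrable_one_sub_gaussian (hp0 : 0 < p) (hp2 : p < 2) :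
    Integrable (fun t => 1 - exp (-(t ^ 2 / 2))) (powMeasure p) := by
  refine integrable_powMeasure hp0 hp2 (by fun_prop) (c := 1 / 2) (d := 1) (fun t => ?_)
    fun t => ?_ <;> rw [abs_of_nonneg (sub_nonneg.2 (exp_neg_sq_div_two_le_one t))]
  · linarith [add_one_le_exp (-(t ^ 2 / 2))]
  · linarith [exp_pos (-(t ^ 2 / 2))]

theorem lintegral_one_sub_cos_mul_powMeasure (hp0 : 0 < p) (hp2 : p < 2) (x : ℝ) :
    ∫⁻ t, ENNReal.ofReal (1 - cos (x * t)) ∂powMeasure p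
      = ENNReal.ofReal (|x| ^ p * cosConst p) := by
  rw [← integral_one_sub_cos_mul hp0,
    ofReal_integral_eq_lintegral_ofReal (integrable_one_sub_cos_mul hp0 hp2 x)]
  exact Eventually.of_forall fun t => by simp [cos_le_one]

theorem lintegral_one_sub_cos_mul_gaussian (t : ℝ) :
    ∫⁻ x, ENNReal.ofReal (1 - cos (x * t)) ∂gaussianReal 0 1
      = ENNReal.ofReal (1 - exp (-(t ^ 2 / 2))) := by
  have hcos := integrable_cos_mul_gaussian t
  have hsub : Integrable (fun x => 1 - cos (x * t)) (gaussianReal 0 1) :=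
    (integrable_const 1).sub hcos
  rw [← ofReal_integral_eq_lintegral_ofReal hsub
    (Eventually.of_forall fun x => by simp [cos_le_one])]
  simp [integral_sub (integrable_const _) hcos, integral_cos_mul_gaussian]

theorem integral_one_sub_gaussian (hp0 : 0 < p) (hp2 : p < 2) :
    ∫ t, (1 - exp (-(t ^ 2 / 2))) ∂powMeasure p = gaussMoment p * cosConst p := by
  have hcos := (cosConst_pos hp0 hp2).le
  have hgauss := (gaussMoment_pos hp0).le
  have hnonneg : ∀ t : ℝ, 0 ≤ 1 - exp (-(t ^ 2 / 2)) := fun t =>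
    sub_nonneg.2 (exp_neg_sq_div_two_le_one t)
  have hswap := lintegral_lintegral_swap (μ := gaussianReal 0 1) (ν := powMeasure p)
    (f := fun x t => ENNReal.ofReal (1 - cos (x * t))) (by fun_prop)
  simp_rw [lintegral_one_sub_cos_mul_powMeasure hp0 hp2,
    lintegral_one_sub_cos_mul_gaussian] at hswap
  rw [← ofReal_integral_eq_lintegral_ofReal ((integrable_abs_rpow_gaussian hp0).mul_const _)
      (Eventually.of_forall fun x => by simp only [Pi.zero_apply]; positivity),
    ← ofReal_integral_eq_lintegral_ofReal (integrable_one_sub_gaussian hp0 hp2)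
      (Eventually.of_forall hnonneg), integral_mul_const, integral_abs_rpow_gaussian hp0,
    ENNReal.ofReal_eq_ofReal_iff (by positivity) (integral_nonneg hnonneg)] at hswap
  exact hswap.symm

end GaussianMoment

section LayerCake

theorem lintegral_rpow_mul_indicator_Ioi {s x : ℝ} (hs : 0 < s) (hx0 : 0 ≤ x) (hx1 : x ≤ 1) :
    ∫⁻ y in Set.Ioo 0 1, ENNReal.ofReal (y ^ (s - 1)) * (Set.Ioi x).indicator 1 y
      = ENNReal.ofReal ((1 - x ^ s) / s) := by
  have hind : ∀ y : ℝ, ENNReal.ofReal (y ^ (s - 1)) * (Set.Ioi x).indicator 1 y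
      = (Set.Ioi x).indicator (fun y => ENNReal.ofReal (y ^ (s - 1))) y := by
    intro y
    by_cases hy : y ∈ Set.Ioi x <;> simp [hy]
  have hinter : Set.Ioi x ∩ Set.Ioo 0 1 = Set.Ioo x 1 := by
    rw [Set.Ioi_inter_Ioo, sup_eq_left.2 hx0]
  simp_rw [hind]
  rw [setLIntegral_indicator measurableSet_Ioi, hinter, ← ofReal_integral_eq_lintegral_ofReal]
  · rw [← integral_Ioc_eq_integral_Ioo, ← intervalIntegral.integral_of_le hx1,
      integral_rpow (Or.inl (by linarith))]
    simp
  · exact (intervalIntegral.intervalIntegrable_rpow' (a := x) (b := 1) (r := s - 1)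
      (by linarith)).1.mono_set Set.Ioo_subset_Ioc_self
  · filter_upwards [ae_restrict_mem measurableSet_Ioo] with y hy
    exact rpow_nonneg (hx0.trans hy.1.le) _

variable {α : Type*} [MeasurableSpace α] {μ : Measure α} {f g : α → ℝ}

theorem lintegral_one_sub_rpow_div [SFinite μ] {s : ℝ} (hs : 0 < s) (hf : Measurable f)
    (hf0 : ∀ t, 0 ≤ f t) (hf1 : ∀ t, f t ≤ 1) :
    ∫⁻ t, ENNReal.ofReal ((1 - f t ^ s) / s) ∂μ
      = ∫⁻ y in Set.Ioo 0 1, ENNReal.ofReal (y ^ (s - 1)) * μ {t | f t < y} := by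
  have hset : MeasurableSet {q : α × ℝ | f q.1 < q.2} :=
    measurableSet_lt (hf.comp measurable_fst) measurable_snd
  have hmeas : Measurable fun q : α × ℝ =>
      ENNReal.ofReal (q.2 ^ (s - 1)) * (Set.Ioi (f q.1)).indicator 1 q.2 :=
    Measurable.mul (by fun_prop) ((measurable_const (a := (1 : ENNReal))).indicator hset)
  calc ∫⁻ t, ENNReal.ofReal ((1 - f t ^ s) / s) ∂μ
      = ∫⁻ t, (∫⁻ y in Set.Ioo 0 1,
          ENNReal.ofReal (y ^ (s - 1)) * (Set.Ioi (f t)).indicator 1 y) ∂μ :=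
        lintegral_congr fun t => (lintegral_rpow_mul_indicator_Ioi hs (hf0 t) (hf1 t)).symm
    _ = ∫⁻ y in Set.Ioo 0 1, ∫⁻ t,
          ENNReal.ofReal (y ^ (s - 1)) * (Set.Ioi (f t)).indicator 1 y ∂μ :=
        lintegral_lintegral_swap (f := fun t y =>
          ENNReal.ofReal (y ^ (s - 1)) * (Set.Ioi (f t)).indicator 1 y) hmeas.aemeasurable
    _ = _ := by
        refine lintegral_congr fun y => ?_
        have hind : ∀ t, (Set.Ioi (f t)).indicator (1 : ℝ → ENNReal) y
            = {t | f t < y}.indicator 1 t := fun t => by simp [Set.indicator_apply]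
        simp_rw [lintegral_const_mul' _ _ ENNReal.ofReal_ne_top, hind]
        rw [lintegral_indicator_one (measurableSet_lt hf measurable_const)]

theorem mul_add_mul_le_of_le {R : Type*} [CommSemiring R] [PartialOrder R] [IsOrderedRing R]
    [CanonicallyOrderedAdd R] {a b c d : R} (hab : a ≤ b) (hcd : c ≤ d) :
    a * d + b * c ≤ a * c + b * d := by
  obtain ⟨e, rfl⟩ := exists_add_of_le hcd
  calc a * (c + e) + b * c = a * c + b * c + a * e := by ring
    _ ≤ a * c + b * c + b * e := by gcongr
    _ = a * c + b * (c + e) := by ring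

theorem ofReal_rpow_mul_add_le_of_crossing {r s y y₀ : ℝ} (hrs : r ≤ s) (hy : 0 < y)
    (hy₀ : 0 < y₀) {a b : ENNReal} (hlt : y < y₀ → a ≤ b) (hgt : y₀ < y → b ≤ a) :
    ENNReal.ofReal (y ^ (s - 1)) * b
        + ENNReal.ofReal (y₀ ^ (s - r)) * (ENNReal.ofReal (y ^ (r - 1)) * a)
      ≤ ENNReal.ofReal (y ^ (s - 1)) * a
        + ENNReal.ofReal (y₀ ^ (s - r)) * (ENNReal.ofReal (y ^ (r - 1)) * b) := by
  have hsplit : y ^ (s - 1) = y ^ (s - r) * y ^ (r - 1) := by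
    rw [← rpow_add hy]; ring_nf
  rw [← mul_assoc, ← mul_assoc, ← ENNReal.ofReal_mul (by positivity), hsplit]
  rcases lt_trichotomy y y₀ with h | rfl | h
  · refine mul_add_mul_le_of_le (ENNReal.ofReal_le_ofReal ?_) (hlt h)
    gcongr
  · rw [add_comm]
  · refine (add_comm _ _).trans_le ((mul_add_mul_le_of_le (ENNReal.ofReal_le_ofReal ?_)
      (hgt h)).trans_eq (add_comm _ _))
    gcongr

-- Multiplying the difference of the distribution functions by `y ^ (s - r) - y₀ ^ (s - r)`
-- makes it nonnegative.
theorem lintegral_one_sub_rpow_le_of_crossing [SFinite μ] {r s y₀ : ℝ} (hr : 0 < r) (hrs : r ≤ s)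
    (hf : Measurable f) (hf0 : ∀ t, 0 ≤ f t) (hf1 : ∀ t, f t ≤ 1)
    (hg : Measurable g) (hg0 : ∀ t, 0 ≤ g t) (hg1 : ∀ t, g t ≤ 1) (hy₀ : 0 < y₀)
    (hlt : ∀ y, 0 < y → y < 1 → y < y₀ → μ {t | f t < y} ≤ μ {t | g t < y})
    (hgt : ∀ y, 0 < y → y < 1 → y₀ < y → μ {t | g t < y} ≤ μ {t | f t < y})
    (hfin : ∫⁻ t, ENNReal.ofReal ((1 - f t ^ r) / r) ∂μ ≠ ⊤)
    (hle : ∫⁻ t, ENNReal.ofReal ((1 - g t ^ r) / r) ∂μ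
      ≤ ∫⁻ t, ENNReal.ofReal ((1 - f t ^ r) / r) ∂μ) :
    ∫⁻ t, ENNReal.ofReal ((1 - g t ^ s) / s) ∂μ
      ≤ ∫⁻ t, ENNReal.ofReal ((1 - f t ^ s) / s) ∂μ := by
  have hs : 0 < s := hr.trans_le hrs
  rw [lintegral_one_sub_rpow_div hr hf hf0 hf1] at hfin hle
  rw [lintegral_one_sub_rpow_div hr hg hg0 hg1] at hle
  rw [lintegral_one_sub_rpow_div hs hf hf0 hf1, lintegral_one_sub_rpow_div hs hg hg0 hg1]
  have hmeas : ∀ h : α → ℝ,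
      Measurable fun y : ℝ => ENNReal.ofReal (y ^ (s - 1)) * μ {t | h t < y} := fun h =>
    Measurable.mul (by fun_prop) <| Monotone.measurable fun y z hyz =>
      measure_mono fun t (ht : h t < y) => ht.trans_le hyz
  have hint := setLIntegral_mono' (μ := volume) measurableSet_Ioo fun y (hy : y ∈ Set.Ioo 0 1) =>
    ofReal_rpow_mul_add_le_of_crossing hrs hy.1 hy₀ (hlt y hy.1 hy.2) (hgt y hy.1 hy.2)
  rw [lintegral_add_left (hmeas g), lintegral_add_left (hmeas f),
    lintegral_const_mul' _ _ ENNReal.ofReal_ne_top,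
    lintegral_const_mul' _ _ ENNReal.ofReal_ne_top] at hint
  have hfin' := ENNReal.mul_ne_top (ENNReal.ofReal_ne_top (r := y₀ ^ (s - r))) hfin
  refine (ENNReal.add_le_add_iff_right hfin').1 (hint.trans ?_)
  gcongr

end LayerCake

section TaylorBounds

theorem nonneg_of_hasDerivAt_nonneg {F F' : ℝ → ℝ} {x : ℝ} (hx : 0 ≤ x)
    (hF : ∀ y ∈ Set.Icc 0 x, HasDerivAt F (F' y) y) (hF' : ∀ y ∈ Set.Icc 0 x, 0 ≤ F' y)
    (h0 : 0 ≤ F 0) : 0 ≤ F x := by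
  have hmono : MonotoneOn F (Set.Icc 0 x) := by
    refine monotoneOn_of_hasDerivWithinAt_nonneg (convex_Icc 0 x)
      (fun y hy => (hF y hy).continuousAt.continuousWithinAt)
      (fun y hy => (hF y (interior_subset hy)).hasDerivWithinAt) fun y hy => ?_
    exact hF' y (interior_subset hy)
  exact h0.trans (hmono (Set.left_mem_Icc.2 hx) (Set.right_mem_Icc.2 hx) hx)

theorem cos_le_taylor_four {x : ℝ} (hx : 0 ≤ x) : cos x ≤ 1 - x ^ 2 / 2 + x ^ 4 / 24 := by
  refine sub_nonneg.1 <| nonneg_of_hasDerivAt_nonneg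
    (F := fun y => (1 - y ^ 2 / 2 + y ^ 4 / 24) - cos y)
    (F' := fun y => sin y - (y - y ^ 3 / 6)) hx (fun y _ => ?_)
    (fun y hy => sub_nonneg.2 (sin_ge_sub_cube hy.1)) (by simp)
  refine ((((hasDerivAt_const y 1).sub ((hasDerivAt_pow 2 y).div_const 2)).add
    ((hasDerivAt_pow 4 y).div_const 24)).sub (hasDerivAt_cos y)).congr_deriv ?_
  norm_num
  ring

theorem sin_le_taylor_five {x : ℝ} (hx : 0 ≤ x) : sin x ≤ x - x ^ 3 / 6 + x ^ 5 / 120 := by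
  refine sub_nonneg.1 <| nonneg_of_hasDerivAt_nonneg
    (F := fun y => (y - y ^ 3 / 6 + y ^ 5 / 120) - sin y)
    (F' := fun y => (1 - y ^ 2 / 2 + y ^ 4 / 24) - cos y) hx (fun y _ => ?_)
    (fun y hy => sub_nonneg.2 (cos_le_taylor_four hy.1)) (by simp)
  refine ((((hasDerivAt_id y).sub ((hasDerivAt_pow 3 y).div_const 6)).add
    ((hasDerivAt_pow 5 y).div_const 120)).sub (hasDerivAt_sin y)).congr_deriv ?_
  norm_num
  ring

theorem taylor_six_le_cos {x : ℝ} (hx : 0 ≤ x) :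
    1 - x ^ 2 / 2 + x ^ 4 / 24 - x ^ 6 / 720 ≤ cos x := by
  refine sub_nonneg.1 <| nonneg_of_hasDerivAt_nonneg
    (F := fun y => cos y - (1 - y ^ 2 / 2 + y ^ 4 / 24 - y ^ 6 / 720))
    (F' := fun y => (y - y ^ 3 / 6 + y ^ 5 / 120) - sin y) hx (fun y _ => ?_)
    (fun y hy => sub_nonneg.2 (sin_le_taylor_five hy.1)) (by simp)
  refine ((hasDerivAt_cos y).sub ((((hasDerivAt_const y 1).sub
    ((hasDerivAt_pow 2 y).div_const 2)).add ((hasDerivAt_pow 4 y).div_const 24)).sub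
    ((hasDerivAt_pow 6 y).div_const 720))).congr_deriv ?_
  norm_num
  ring

theorem cos_pos_of_nonneg_of_lt {θ : ℝ} (h0 : 0 ≤ θ) (h1 : θ < π / 2) : 0 < cos θ :=
  cos_pos_of_mem_Ioo ⟨by linarith [pi_pos], h1⟩

theorem hasDerivAt_tan_one_add_sq {y : ℝ} (hc : cos y ≠ 0) :
    HasDerivAt tan (1 + tan y ^ 2) y := by
  refine (hasDerivAt_tan hc).congr_deriv ?_
  rw [tan_eq_sin_div_cos]
  field_simp
  exact (cos_sq_add_sin_sq y).symm

-- Picard iteration for the differential equation `dy = (1 + y ^ 2) dx` of `tan`.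
theorem le_tan_of_deriv_le_one_add_sq {P Q Q' : ℝ → ℝ} (hP0 : ∀ y, 0 ≤ y → 0 ≤ P y)
    (hP : ∀ y, 0 ≤ y → y < π / 2 → P y ≤ tan y) (hQ : ∀ y, HasDerivAt Q (Q' y) y)
    (hQP : ∀ y, Q' y ≤ 1 + P y ^ 2) (hQ0 : Q 0 = 0) {y : ℝ} (hy0 : 0 ≤ y)
    (hy1 : y < π / 2) : Q y ≤ tan y := by
  refine sub_nonneg.1 <| nonneg_of_hasDerivAt_nonneg (F := fun y => tan y - Q y)
    (F' := fun y => 1 + tan y ^ 2 - Q' y) hy0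
    (fun z hz => (hasDerivAt_tan_one_add_sq
      (cos_pos_of_nonneg_of_lt hz.1 (hz.2.trans_lt hy1)).ne').sub (hQ z))
    (fun z hz => ?_) (by simp [hQ0])
  have := pow_le_pow_left₀ (hP0 z hz.1) (hP z hz.1 (hz.2.trans_lt hy1)) 2
  linarith [hQP z]

theorem taylor_three_le_tan {y : ℝ} (hy0 : 0 ≤ y) (hy1 : y < π / 2) : y + y ^ 3 / 3 ≤ tan y :=
  le_tan_of_deriv_le_one_add_sq (P := fun y => y) (Q := fun y => y + y ^ 3 / 3)
    (Q' := fun y => 1 + y ^ 2) (fun _ h => h) (fun _ => le_tan)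
    (fun y => ((hasDerivAt_id y).add ((hasDerivAt_pow 3 y).div_const 3)).congr_deriv
      (by norm_num))
    (fun _ => le_rfl) (by simp) hy0 hy1

theorem taylor_five_le_tan {y : ℝ} (hy0 : 0 ≤ y) (hy1 : y < π / 2) :
    y + y ^ 3 / 3 + 2 * y ^ 5 / 15 ≤ tan y :=
  le_tan_of_deriv_le_one_add_sq (P := fun y => y + y ^ 3 / 3)
    (Q := fun y => y + y ^ 3 / 3 + 2 * y ^ 5 / 15)
    (Q' := fun y => 1 + y ^ 2 + 2 * y ^ 4 / 3) (fun _ h => by positivity)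
    (fun _ => taylor_three_le_tan)
    (fun y => (((hasDerivAt_id y).add ((hasDerivAt_pow 3 y).div_const 3)).add
      (((hasDerivAt_pow 5 y).const_mul 2).div_const 15)).congr_deriv (by norm_num; ring))
    (fun y => by nlinarith [sq_nonneg (y ^ 3)]) (by simp) hy0 hy1

theorem taylor_seven_le_tan {y : ℝ} (hy0 : 0 ≤ y) (hy1 : y < π / 2) :
    y + y ^ 3 / 3 + 2 * y ^ 5 / 15 + 17 * y ^ 7 / 315 ≤ tan y :=
  le_tan_of_deriv_le_one_add_sq (P := fun y => y + y ^ 3 / 3 + 2 * y ^ 5 / 15)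
    (Q := fun y => y + y ^ 3 / 3 + 2 * y ^ 5 / 15 + 17 * y ^ 7 / 315)
    (Q' := fun y => 1 + y ^ 2 + 2 * y ^ 4 / 3 + 17 * y ^ 6 / 45) (fun _ h => by positivity)
    (fun _ => taylor_five_le_tan)
    (fun y => ((((hasDerivAt_id y).add ((hasDerivAt_pow 3 y).div_const 3)).add
      (((hasDerivAt_pow 5 y).const_mul 2).div_const 15)).add
      (((hasDerivAt_pow 7 y).const_mul 17).div_const 315)).congr_deriv (by norm_num; ring))
    (fun y => by nlinarith [sq_nonneg (y ^ 4), sq_nonneg (y ^ 5)]) (by simp) hy0 hy1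

end TaylorBounds

section GaussLevel

/-- The square of the positive point where the Gaussian `exp (-t ^ 2 / 2)` takes the value
`cos θ`, for `0 < θ < π / 2`. -/
noncomputable def gaussLevel (θ : ℝ) : ℝ := -(2 * log (cos θ))

/-- The Taylor polynomial of `gaussLevel θ / θ ^ 2` in the variable `q = θ ^ 2`, used as a lower
bound of that quotient. -/
noncomputable def gaussLevelTaylor (q : ℝ) : ℝ :=
  1 + q / 6 + 2 * q ^ 2 / 45 + 17 * q ^ 3 / 1260

theorem one_le_gaussLevelTaylor {q : ℝ} (hq : 0 ≤ q) : 1 ≤ gaussLevelTaylor q := by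
  have : 0 ≤ q / 6 + 2 * q ^ 2 / 45 + 17 * q ^ 3 / 1260 := by positivity
  unfold gaussLevelTaylor
  linarith

theorem gaussLevelTaylor_le_two {q : ℝ} (hq0 : 0 ≤ q) (hq : q ≤ 11 / 10) :
    gaussLevelTaylor q ≤ 2 := by
  calc gaussLevelTaylor q ≤ gaussLevelTaylor (11 / 10) := by unfold gaussLevelTaylor; gcongr
    _ ≤ 2 := by norm_num [gaussLevelTaylor]

theorem hasDerivAt_gaussLevel {θ : ℝ} (hc : cos θ ≠ 0) :
    HasDerivAt gaussLevel (2 * tan θ) θ := by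
  refine (((hasDerivAt_cos θ).log hc).const_mul 2).neg.congr_deriv ?_
  rw [tan_eq_sin_div_cos]
  ring

theorem sq_mul_gaussLevelTaylor_le_gaussLevel {θ : ℝ} (h0 : 0 ≤ θ) (h1 : θ < π / 2) :
    θ ^ 2 * gaussLevelTaylor (θ ^ 2) ≤ gaussLevel θ := by
  have hexpand : θ ^ 2 * gaussLevelTaylor (θ ^ 2)
      = θ ^ 2 + θ ^ 4 / 6 + 2 * θ ^ 6 / 45 + 17 * θ ^ 8 / 1260 := by
    unfold gaussLevelTaylor; ring
  rw [hexpand, ← sub_nonneg]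
  refine nonneg_of_hasDerivAt_nonneg
    (F := fun y => gaussLevel y - (y ^ 2 + y ^ 4 / 6 + 2 * y ^ 6 / 45 + 17 * y ^ 8 / 1260))
    (F' := fun y => 2 * (tan y - (y + y ^ 3 / 3 + 2 * y ^ 5 / 15 + 17 * y ^ 7 / 315))) h0
    (fun y hy => ?_)
    (fun y hy => by linarith [taylor_seven_le_tan hy.1 (hy.2.trans_lt h1)]) (by simp [gaussLevel])
  refine ((hasDerivAt_gaussLevel (cos_pos_of_nonneg_of_lt hy.1 (hy.2.trans_lt h1)).ne').sub
    ((((hasDerivAt_pow 2 y).add ((hasDerivAt_pow 4 y).div_const 6)).add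
    (((hasDerivAt_pow 6 y).const_mul 2).div_const 45)).add
    (((hasDerivAt_pow 8 y).const_mul 17).div_const 1260))).congr_deriv ?_
  norm_num
  ring

theorem sq_le_gaussLevel {θ : ℝ} (h0 : 0 ≤ θ) (h1 : θ < π / 2) : θ ^ 2 ≤ gaussLevel θ :=
  (le_mul_of_one_le_right (sq_nonneg θ) (one_le_gaussLevelTaylor (sq_nonneg θ))).trans
    (sq_mul_gaussLevelTaylor_le_gaussLevel h0 h1)

theorem taylor_sin_mul_le_taylor_cos_mul {q : ℝ} (hq0 : 0 ≤ q) (hq : q ≤ 11 / 10) :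
    (1 - q / 6 + q ^ 2 / 120) * (gaussLevelTaylor q / 4 + 7 / 4)
      ≤ (1 - q / 2 + q ^ 2 / 24 - q ^ 3 / 720)
        * (3 * gaussLevelTaylor q ^ 2 - gaussLevelTaylor q) := by
  have hpow : ∀ k, q ^ k ≤ (11 / 10) ^ k := pow_le_pow_left₀ hq0 hq
  have h2 := hpow 2
  have h3 := hpow 3
  have h4 := hpow 4
  have h5 := hpow 5
  have h6 := hpow 6
  have h8 := hpow 8
  have h7 : 0 ≤ q ^ 7 := by positivity
  have hfactor : 0 ≤ 1 / 8 - 7 / 144 * q - 653 / 60480 * q ^ 2 - 529 / 21600 * q ^ 3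
      - 3449 / 1814400 * q ^ 4 - 761 / 1270080 * q ^ 5 - 14299 / 95256000 * q ^ 6
      + 3383 / 190512000 * q ^ 7 - 289 / 381024000 * q ^ 8 := by
    norm_num at h2 h3 h4 h5 h6 h8
    linarith
  unfold gaussLevelTaylor
  refine le_of_sub_nonneg ((mul_nonneg hq0 hfactor).trans_eq ?_)
  ring

theorem sq_le_of_le_pi_div_three {θ : ℝ} (h0 : 0 ≤ θ) (h1 : θ ≤ π / 3) : θ ^ 2 ≤ 11 / 10 := by
  nlinarith [pi_lt_d4]

theorem mul_tan_mul_le_of_le_pi_div_three {θ : ℝ} (h0 : 0 ≤ θ) (h1 : θ ≤ π / 3) :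
    θ * tan θ * (gaussLevelTaylor (θ ^ 2) / 4 + 7 / 4)
      ≤ θ ^ 2 * (3 * gaussLevelTaylor (θ ^ 2) ^ 2 - gaussLevelTaylor (θ ^ 2)) := by
  have hc := cos_pos_of_nonneg_of_lt h0 (by linarith [pi_pos])
  have hpoly := taylor_sin_mul_le_taylor_cos_mul (sq_nonneg θ) (sq_le_of_le_pi_div_three h0 h1)
  have hl := one_le_gaussLevelTaylor (sq_nonneg θ)
  set l := gaussLevelTaylor (θ ^ 2)
  have hsin : sin θ ≤ θ * (1 - θ ^ 2 / 6 + (θ ^ 2) ^ 2 / 120) := by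
    linarith [sin_le_taylor_five h0]
  have hcos : 1 - θ ^ 2 / 2 + (θ ^ 2) ^ 2 / 24 - (θ ^ 2) ^ 3 / 720 ≤ cos θ := by
    linarith [taylor_six_le_cos h0]
  have hquad : 0 ≤ 3 * l ^ 2 - l := by nlinarith
  rw [tan_eq_sin_div_cos, mul_div_assoc', div_mul_eq_mul_div, div_le_iff₀ hc]
  calc θ * sin θ * (l / 4 + 7 / 4)
      ≤ θ * (θ * (1 - θ ^ 2 / 6 + (θ ^ 2) ^ 2 / 120)) * (l / 4 + 7 / 4) := by gcongr
    _ = θ ^ 2 * ((1 - θ ^ 2 / 6 + (θ ^ 2) ^ 2 / 120) * (l / 4 + 7 / 4)) := by ring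
    _ ≤ θ ^ 2 * (cos θ * (3 * l ^ 2 - l)) := by
        gcongr θ ^ 2 * ?_
        exact hpoly.trans (mul_le_mul_of_nonneg_right hcos hquad)
    _ = θ ^ 2 * (3 * l ^ 2 - l) * cos θ := by ring

theorem mul_tan_mul_gaussLevel_le {θ : ℝ} (h0 : 0 ≤ θ) (h1 : θ ≤ π / 3) :
    θ * tan θ * (gaussLevel θ / 4 + 7 / 4 * θ ^ 2)
      ≤ 3 * gaussLevel θ ^ 2 - θ ^ 2 * gaussLevel θ := by
  have h2 : θ < π / 2 := by linarith [pi_pos]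
  have hlevel := sq_mul_gaussLevelTaylor_le_gaussLevel h0 h2
  have htan := mul_tan_mul_le_of_le_pi_div_three h0 h1
  have hl1 := one_le_gaussLevelTaylor (sq_nonneg θ)
  have hl2 := gaussLevelTaylor_le_two (sq_nonneg θ) (sq_le_of_le_pi_div_three h0 h1)
  have hT : 0 ≤ θ * tan θ := mul_nonneg h0 (h0.trans (le_tan h0 h2))
  have hq : 0 ≤ θ ^ 2 := sq_nonneg θ
  obtain ⟨e, he⟩ : ∃ e, gaussLevel θ = θ ^ 2 * gaussLevelTaylor (θ ^ 2) + e :=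
    ⟨_, (add_sub_cancel _ _).symm⟩
  rw [he] at hlevel ⊢
  have he0 : 0 ≤ e := by linarith
  generalize gaussLevelTaylor (θ ^ 2) = l at *
  generalize θ * tan θ = T at *
  generalize θ ^ 2 = q at *
  -- The inequality holds at `e = 0` by `htan`, and `hslope` makes the difference increase in `e`.
  have hslope : T / 4 ≤ 6 * (q * l) - q := by
    have hT2 : T * 2 ≤ T * (l / 4 + 7 / 4) := by gcongr; linarith
    have hquad : q * (3 * l ^ 2 - l) ≤ q * (6 * l - 1) := by gcongr ?_ * ?_; nlinarith
    nlinarith [mul_nonneg hq (sub_nonneg.2 hl1)]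
  nlinarith [mul_le_mul_of_nonneg_left htan hq, mul_le_mul_of_nonneg_left hslope he0, sq_nonneg e]

theorem div_rpow_mul_one_add_le {p q L T : ℝ} (hp : 7 / 4 ≤ p) (hp2 : p ≤ 2) (hq : 0 ≤ q)
    (hL : 0 < L) (hqL : q ≤ L) (hT : 0 ≤ T) (hTL : T * (L / 4 + 7 / 4 * q) ≤ 3 * L ^ 2 - q * L) :
    (q / L) ^ (p / 2) * (1 + p * T / L) ≤ p + 1 := by
  have hbernoulli : (q / L) ^ (p / 2) ≤ 1 + p / 2 * (q / L - 1) := by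
    have := rpow_one_add_le_one_add_mul_self (s := q / L - 1) (p := p / 2)
      (by linarith [div_nonneg hq hL.le]) (by linarith) (by linarith)
    rwa [add_sub_cancel] at this
  have hnum : 0 ≤ 3 * L ^ 2 - q * L - 2 * T * L + p * T * (L - q) := by
    nlinarith [mul_nonneg (mul_nonneg hT (sub_nonneg.2 hqL)) (sub_nonneg.2 hp)]
  have hdiff : p + 1 - (1 + p / 2 * (q / L - 1)) * (1 + p * T / L)
      = p / 2 * (3 * L ^ 2 - q * L - 2 * T * L + p * T * (L - q)) / L ^ 2 := by
    field_simp
    ring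
  calc (q / L) ^ (p / 2) * (1 + p * T / L)
      ≤ (1 + p / 2 * (q / L - 1)) * (1 + p * T / L) := by gcongr
    _ ≤ p + 1 := by
        rw [← sub_nonneg, hdiff]
        positivity

theorem hasDerivAt_levelDiff_div (p : ℝ) {θ : ℝ} (h0 : 0 < θ) (h1 : θ < π / 2) :
    HasDerivAt (fun θ : ℝ => (θ ^ (-p) - gaussLevel θ ^ (-(p / 2))) / θ)
      (((θ ^ 2 / gaussLevel θ) ^ (p / 2) * (1 + p * (θ * tan θ) / gaussLevel θ) - (p + 1))
        / (θ ^ p * θ ^ 2)) θ := by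
  have hL : 0 < gaussLevel θ := (pow_pos h0 2).trans_le (sq_le_gaussLevel h0.le h1)
  have hqp : (θ ^ 2) ^ (p / 2) = θ ^ p := by rw [sq_rpow_half, abs_of_pos h0]
  refine (((hasDerivAt_rpow_const (Or.inl h0.ne')).sub
    ((hasDerivAt_gaussLevel (cos_pos_of_nonneg_of_lt h0.le h1).ne').rpow_const
      (Or.inl hL.ne'))).div (hasDerivAt_id θ) h0.ne').congr_deriv ?_
  rw [div_rpow (sq_nonneg θ) hL.le, hqp, rpow_sub_one h0.ne', rpow_sub_one hL.ne', rpow_neg h0.le,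
    rpow_neg hL.le]
  have hθp := (rpow_pos_of_pos h0 p).ne'
  have hLp := (rpow_pos_of_pos hL (p / 2)).ne'
  simp only [id, Pi.sub_apply, rpow_neg h0.le, rpow_neg hL.le]
  field_simp
  ring

theorem antitoneOn_levelDiff_div {p : ℝ} (hp : 7 / 4 ≤ p) (hp2 : p ≤ 2) :
    AntitoneOn (fun θ : ℝ => (θ ^ (-p) - gaussLevel θ ^ (-(p / 2))) / θ) (Set.Ioc 0 (π / 3)) := by
  have hlt : ∀ θ ∈ Set.Ioc 0 (π / 3), θ < π / 2 := fun θ hθ => by linarith [hθ.2, pi_pos]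
  have hderiv := fun θ hθ => hasDerivAt_levelDiff_div p (Set.mem_Ioc.1 hθ).1 (hlt θ hθ)
  refine antitoneOn_of_hasDerivWithinAt_nonpos (convex_Ioc 0 _)
    (fun θ hθ => (hderiv θ hθ).continuousAt.continuousWithinAt)
    (fun θ hθ => (hderiv θ (interior_subset hθ)).hasDerivWithinAt) fun θ hθ => ?_
  obtain ⟨h0, h1⟩ := interior_subset hθ
  have h2 := hlt θ ⟨h0, h1⟩
  have hsq := sq_le_gaussLevel h0.le h2
  have hbound := div_rpow_mul_one_add_le hp hp2 (sq_nonneg θ) ((pow_pos h0 2).trans_le hsq) hsq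
    (mul_nonneg h0.le (h0.le.trans (le_tan h0.le h2))) (mul_tan_mul_gaussLevel_le h0.le h1)
  exact div_nonpos_of_nonpos_of_nonneg (by linarith) (by positivity)

end GaussLevel

section CosPeaks

/-- The neighbourhoods of radius `θ` of the positive multiples of `π`. For `θ < π / 2` they carry
the part of `Set.Ioi θ` on which `|cos|` is at least `cos θ`, see `mem_cosPeaks_iff`. -/
def cosPeaks (θ : ℝ) : Set ℝ := ⋃ k : ℕ, Set.Icc (π * (k + 1) - θ) (π * (k + 1) + θ)

theorem measurableSet_cosPeaks (θ : ℝ) : MeasurableSet (cosPeaks θ) :=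
  MeasurableSet.iUnion fun _ => measurableSet_Icc

theorem pairwise_disjoint_Icc_mul_pi {θ : ℝ} (h : θ < π / 2) :
    Pairwise (Function.onFun Disjoint
      fun k : ℕ => Set.Icc (π * (k + 1) - θ) (π * (k + 1) + θ)) := by
  have hmono : Monotone fun k : ℕ => π * (k + 1) - π / 2 := fun i j hij => by
    dsimp only
    gcongr
  refine hmono.pairwise_disjoint_on_Ioc_succ.mono fun i j hij => hij.mono ?_ ?_ <;>
  · refine fun x hx => ⟨by linarith [hx.1], hx.2.trans ?_⟩
    simp only [Order.succ_eq_add_one, Nat.cast_add, Nat.cast_one]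
    linarith

theorem abs_cos_sub_nat_mul_pi (t : ℝ) (k : ℕ) : |cos (t - k * π)| = |cos t| := by
  simp [cos_sub_nat_mul_pi, abs_mul]

theorem exists_abs_sub_nat_mul_pi_le {t : ℝ} (ht : 0 ≤ t) : ∃ k : ℕ, |t - k * π| ≤ π / 2 := by
  have hpi := pi_pos
  have hmul : t / π * π = t := div_mul_cancel₀ t hpi.ne'
  have hfloor := Nat.floor_le (show 0 ≤ t / π + 1 / 2 by positivity)
  have hlt := Nat.lt_floor_add_one (t / π + 1 / 2)
  refine ⟨⌊t / π + 1 / 2⌋₊, abs_le.2 ⟨?_, ?_⟩⟩ <;> nlinarith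

theorem lt_of_abs_cos_lt_cos {θ t : ℝ} (hθ : θ ≤ π) (ht : 0 ≤ t) (h : |cos t| < cos θ) :
    θ < t := by
  by_contra! hle
  have := cos_le_cos_of_nonneg_of_le_pi ht hθ hle
  linarith [le_abs_self (cos t)]

theorem lt_of_mem_cosPeaks {θ t : ℝ} (hθ : θ < π / 2) (ht : t ∈ cosPeaks θ) : θ < t := by
  obtain ⟨k, hk⟩ := Set.mem_iUnion.1 ht
  nlinarith [hk.1, pi_pos, k.cast_nonneg (α := ℝ)]

theorem cos_le_abs_cos_of_mem_cosPeaks {θ t : ℝ} (hθ : θ ≤ π) (ht : t ∈ cosPeaks θ) :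
    cos θ ≤ |cos t| := by
  obtain ⟨k, hk⟩ := Set.mem_iUnion.1 ht
  rw [← abs_cos_sub_nat_mul_pi t (k + 1), ← cos_abs (t - _)]
  refine (cos_le_cos_of_nonneg_of_le_pi (abs_nonneg _) hθ (abs_le.2 ?_)).trans (le_abs_self _)
  push_cast
  constructor <;> linarith [hk.1, hk.2]

theorem mem_cosPeaks_of_cos_le_abs_cos {θ t : ℝ} (h0 : 0 ≤ θ) (hθ : θ < t)
    (hcos : cos θ ≤ |cos t|) : t ∈ cosPeaks θ := by
  obtain ⟨k, hk⟩ := exists_abs_sub_nat_mul_pi_le (h0.trans hθ.le)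
  have hle : |t - k * π| ≤ θ := by
    by_contra! hlt
    have hcos_lt := cos_lt_cos_of_nonneg_of_le_pi h0 (by linarith [pi_pos]) hlt
    rw [cos_abs] at hcos_lt
    rw [← abs_cos_sub_nat_mul_pi t k, abs_of_nonneg (cos_nonneg_of_mem_Icc (abs_le.1 hk))] at hcos
    linarith
  rcases k with _ | k
  · rw [Nat.cast_zero, zero_mul, sub_zero] at hle
    linarith [le_abs_self t]
  · push_cast at hle
    obtain ⟨hlow, hupp⟩ := abs_le.1 hle
    exact Set.mem_iUnion.2 ⟨k, by linarith, by linarith⟩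

theorem mem_cosPeaks_iff {θ t : ℝ} (h0 : 0 ≤ θ) (h1 : θ < π / 2) :
    t ∈ cosPeaks θ ↔ θ < t ∧ cos θ ≤ |cos t| :=
  ⟨fun h => ⟨lt_of_mem_cosPeaks h1 h,
    cos_le_abs_cos_of_mem_cosPeaks (by linarith [pi_pos]) h⟩,
    fun h => mem_cosPeaks_of_cos_le_abs_cos h0 h.1 h.2⟩

variable {p : ℝ}

theorem powMeasure_Ioc {a b : ℝ} (hp : 0 < p) (ha : 0 < a) (hab : a ≤ b) :
    powMeasure p (Set.Ioc a b) = ENNReal.ofReal ((a ^ (-p) - b ^ (-p)) / p) := by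
  have hb := ha.trans_le hab
  rw [← Set.Ioi_sdiff_Ioi, measure_sdiff (Set.Ioi_subset_Ioi hab)
    measurableSet_Ioi.nullMeasurableSet (by rw [powMeasure_Ioi hp hb]; exact ENNReal.ofReal_ne_top),
    powMeasure_Ioi hp ha, powMeasure_Ioi hp hb, ← ENNReal.ofReal_sub _ (by positivity), sub_div]

theorem powMeasure_Icc {a b : ℝ} (hp : 0 < p) (ha : 0 < a) (hab : a ≤ b) :
    powMeasure p (Set.Icc a b) = ENNReal.ofReal ((a ^ (-p) - b ^ (-p)) / p) := by
  have hnull : powMeasure p {a} = 0 :=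
    withDensity_absolutelyContinuous _ _ (nonpos_iff_eq_zero.1
      ((Measure.restrict_apply_le _ _).trans_eq (measure_singleton a)))
  rw [← powMeasure_Ioc hp ha hab]
  exact (measure_congr (Ioc_ae_eq_Icc' hnull)).symm

theorem convexOn_sub_rpow_sub_add_rpow {m θ : ℝ} (hp : 0 ≤ p) (hm : θ < m) :
    ConvexOn ℝ (Set.Icc 0 θ) fun x => (m - x) ^ (-p) - (m + x) ^ (-p) := by
  have hsub : ∀ x ∈ Set.Icc 0 θ, 0 < m - x := fun x hx => by linarith [hx.2]
  have hadd : ∀ x ∈ Set.Icc 0 θ, 0 < m + x := fun x hx => by linarith [hx.1, hx.2]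
  have dsub : ∀ q, ∀ x ∈ Set.Icc 0 θ,
      HasDerivAt (fun x => (m - x) ^ q) (-1 * q * (m - x) ^ (q - 1)) x :=
    fun q x hx => ((hasDerivAt_id x).const_sub m).rpow_const (Or.inl (hsub x hx).ne')
  have dadd : ∀ q, ∀ x ∈ Set.Icc 0 θ,
      HasDerivAt (fun x => (m + x) ^ q) (1 * q * (m + x) ^ (q - 1)) x :=
    fun q x hx => ((hasDerivAt_id x).const_add m).rpow_const (Or.inl (hadd x hx).ne')
  refine convexOn_of_hasDerivWithinAt2_nonneg (convex_Icc 0 θ)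
    (f' := fun x => -1 * (-p) * (m - x) ^ (-p - 1) - 1 * (-p) * (m + x) ^ (-p - 1))
    (f'' := fun x => -1 * (-p) * (-1 * (-p - 1) * (m - x) ^ (-p - 1 - 1))
      - 1 * (-p) * (1 * (-p - 1) * (m + x) ^ (-p - 1 - 1)))
    (fun x hx => ((dsub _ x hx).sub (dadd _ x hx)).continuousAt.continuousWithinAt)
    (fun x hx => ?_) (fun x hx => ?_) fun x hx => ?_
  all_goals replace hx := interior_subset hx
  · exact ((dsub _ x hx).sub (dadd _ x hx)).hasDerivWithinAt
  · exact (((dsub _ x hx).const_mul _).sub ((dadd _ x hx).const_mul _)).hasDerivWithinAt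
  · have hpow : (m + x) ^ (-p - 1 - 1) ≤ (m - x) ^ (-p - 1 - 1) :=
      rpow_le_rpow_of_nonpos (hsub x hx) (by linarith [hx.1]) (by linarith)
    linarith [mul_le_mul_of_nonneg_left hpow (show 0 ≤ p * (p + 1) by positivity)]

theorem sub_rpow_sub_add_rpow_smul_le {m θ c : ℝ} (hp : 0 ≤ p) (h0 : 0 ≤ θ) (hm : θ < m)
    (hc0 : 0 ≤ c) (hc1 : c ≤ 1) :
    (m - c * θ) ^ (-p) - (m + c * θ) ^ (-p) ≤ c * ((m - θ) ^ (-p) - (m + θ) ^ (-p)) := by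
  have := (convexOn_sub_rpow_sub_add_rpow hp hm).2 (Set.left_mem_Icc.2 h0)
    (Set.right_mem_Icc.2 h0) (sub_nonneg.2 hc1) hc0 (sub_add_cancel 1 c)
  simpa using this

theorem powMeasure_Icc_smul_le {m θ c : ℝ} (hp : 0 < p) (h0 : 0 ≤ θ) (hm : θ < m)
    (hc0 : 0 ≤ c) (hc1 : c ≤ 1) :
    powMeasure p (Set.Icc (m - c * θ) (m + c * θ))
      ≤ ENNReal.ofReal c * powMeasure p (Set.Ioc (m - θ) (m + θ)) := by
  have hcθ : c * θ ≤ θ := mul_le_of_le_one_left h0 hc1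
  have hcθ0 : 0 ≤ c * θ := mul_nonneg hc0 h0
  rw [powMeasure_Icc hp (by linarith) (by linarith), powMeasure_Ioc hp (by linarith) (by linarith),
    ← ENNReal.ofReal_mul hc0, ← mul_div_assoc]
  gcongr
  exact sub_rpow_sub_add_rpow_smul_le hp.le h0 hm hc0 hc1

theorem powMeasure_cosPeaks_smul_le {θ c : ℝ} (hp : 0 < p) (h0 : 0 ≤ θ) (h1 : θ < π / 2)
    (hc0 : 0 ≤ c) (hc1 : c ≤ 1) :
    powMeasure p (cosPeaks (c * θ)) ≤ ENNReal.ofReal c * powMeasure p (cosPeaks θ) := by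
  rw [cosPeaks, cosPeaks, measure_iUnion (pairwise_disjoint_Icc_mul_pi h1) fun _ =>
    measurableSet_Icc, ← ENNReal.tsum_mul_left]
  refine (measure_iUnion_le _).trans (ENNReal.tsum_le_tsum fun k => ?_)
  have hk : θ < π * (k + 1) := by nlinarith [pi_pos, k.cast_nonneg (α := ℝ)]
  refine (powMeasure_Icc_smul_le hp h0 hk hc0 hc1).trans ?_
  gcongr
  exact Set.Ioc_subset_Icc_self

end CosPeaks

section Sublevels

theorem gaussLevel_pos {θ : ℝ} (h0 : 0 < θ) (h1 : θ < π / 2) : 0 < gaussLevel θ :=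
  (pow_pos h0 2).trans_le (sq_le_gaussLevel h0.le h1)

theorem gaussian_lt_cos_iff {θ t : ℝ} (h0 : 0 ≤ θ) (h1 : θ < π / 2) (ht : 0 < t) :
    exp (-(t ^ 2 / 2)) < cos θ ↔ √(gaussLevel θ) < t := by
  rw [← lt_log_iff_exp_lt (cos_pos_of_nonneg_of_lt h0 h1), sqrt_lt' ht, gaussLevel]
  constructor <;> intro h <;> linarith

theorem powMeasure_gaussian_lt_eq_Ioi {θ : ℝ} (p : ℝ) (h0 : 0 ≤ θ) (h1 : θ < π / 2) :
    powMeasure p {t | exp (-(t ^ 2 / 2)) < cos θ} = powMeasure p (Set.Ioi √(gaussLevel θ)) := by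
  refine measure_congr ?_
  filter_upwards [powMeasure_ae_pos p] with t ht
  exact propext (gaussian_lt_cos_iff h0 h1 ht)

variable {p : ℝ}

theorem powMeasure_gaussian_lt {θ : ℝ} (hp : 0 < p) (h0 : 0 < θ) (h1 : θ < π / 2) :
    powMeasure p {t | exp (-(t ^ 2 / 2)) < cos θ}
      = ENNReal.ofReal (gaussLevel θ ^ (-(p / 2)) / p) := by
  have hL := gaussLevel_pos h0 h1
  rw [powMeasure_gaussian_lt_eq_Ioi p h0.le h1, powMeasure_Ioi hp (sqrt_pos.2 hL), sqrt_eq_rpow,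
    ← rpow_mul hL.le]
  ring_nf

theorem powMeasure_abs_cos_lt_add {θ : ℝ} (hp : 0 < p) (h0 : 0 < θ) (h1 : θ < π / 2) :
    powMeasure p {t | |cos t| < cos θ} + powMeasure p (cosPeaks θ)
      = ENNReal.ofReal (θ ^ (-p) / p) := by
  have hsub : cosPeaks θ ⊆ Set.Ioi θ := fun _ => lt_of_mem_cosPeaks h1
  rw [← powMeasure_Ioi hp h0, ← measure_sdiff_add_inter (Set.Ioi θ) (measurableSet_cosPeaks θ),
    Set.inter_eq_right.2 hsub]
  congr 1
  refine measure_congr ?_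
  filter_upwards [powMeasure_ae_pos p] with t ht
  refine propext ?_
  change |cos t| < cos θ ↔ θ < t ∧ t ∉ cosPeaks θ
  rw [mem_cosPeaks_iff h0.le h1, not_and, not_le]
  exact ⟨fun h => ⟨lt_of_abs_cos_lt_cos (by linarith [pi_pos]) ht.le h, fun _ => h⟩,
    fun h => h.2 h.1⟩

theorem powMeasure_gaussian_lt_le_iff {θ : ℝ} (hp : 0 < p) (h0 : 0 < θ) (h1 : θ < π / 2) :
    powMeasure p {t | exp (-(t ^ 2 / 2)) < cos θ} ≤ powMeasure p {t | |cos t| < cos θ} ↔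
      powMeasure p (cosPeaks θ)
        ≤ ENNReal.ofReal ((θ ^ (-p) - gaussLevel θ ^ (-(p / 2))) / p) := by
  have hL := gaussLevel_pos h0 h1
  have hadd := powMeasure_abs_cos_lt_add hp h0 h1
  have hgauss := powMeasure_gaussian_lt hp h0 h1
  have hle : powMeasure p {t | exp (-(t ^ 2 / 2)) < cos θ}
      ≤ powMeasure p {t | |cos t| < cos θ} + powMeasure p (cosPeaks θ) := by
    rw [hadd, hgauss]
    gcongr
    have := rpow_le_rpow_of_nonpos (pow_pos h0 2) (sq_le_gaussLevel h0.le h1)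
      (show -(p / 2) ≤ 0 by linarith)
    rwa [← rpow_two, ← rpow_mul h0.le, show 2 * -(p / 2) = -p by ring] at this
  have hfin : powMeasure p (cosPeaks θ) ≠ ⊤ := fun h => by simp [h] at hadd
  rw [sub_div, ENNReal.ofReal_sub _ (by positivity), ← hadd, ← hgauss,
    ENNReal.le_sub_iff_add_le_right (hgauss ▸ ENNReal.ofReal_ne_top) hle, add_comm,
    ENNReal.add_le_add_iff_right hfin]

theorem powMeasure_gaussian_lt_le_of_le {θ₁ θ₂ : ℝ} (hp : 7 / 4 ≤ p) (hp2 : p ≤ 2) (h0 : 0 < θ₁)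
    (h12 : θ₁ ≤ θ₂) (h2 : θ₂ ≤ π / 3)
    (h : powMeasure p {t | exp (-(t ^ 2 / 2)) < cos θ₂} ≤ powMeasure p {t | |cos t| < cos θ₂}) :
    powMeasure p {t | exp (-(t ^ 2 / 2)) < cos θ₁} ≤ powMeasure p {t | |cos t| < cos θ₁} := by
  have hθ₂ : 0 < θ₂ := h0.trans_le h12
  have hlt : θ₂ < π / 2 := by linarith [pi_pos]
  have hp0 : 0 < p := by linarith
  have hpeaks := powMeasure_cosPeaks_smul_le hp0 hθ₂.le hlt (c := θ₁ / θ₂) (by positivity)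
    ((div_le_one hθ₂).2 h12)
  have hanti := antitoneOn_levelDiff_div hp hp2 ⟨h0, h12.trans h2⟩ ⟨hθ₂, h2⟩ h12
  dsimp only at hanti
  rw [powMeasure_gaussian_lt_le_iff hp0 hθ₂ hlt] at h
  rw [powMeasure_gaussian_lt_le_iff hp0 h0 (h12.trans_lt hlt)]
  rw [div_mul_cancel₀ _ hθ₂.ne'] at hpeaks
  refine hpeaks.trans ((mul_le_mul_right h _).trans ?_)
  rw [← ENNReal.ofReal_mul (by positivity), ← mul_div_assoc]
  gcongr
  rw [le_div_iff₀ h0] at hanti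
  exact (div_mul_comm ..).trans_le hanti

end Sublevels

section Comparison

variable {p q τ : ℝ} {B : Set ℝ}

theorem powMeasure_le_of_subset_Iic (hpq : p ≤ q) (hB : MeasurableSet B) (h : B ⊆ Set.Iic τ) :
    powMeasure p B ≤ ENNReal.ofReal (τ ^ (q - p)) * powMeasure q B := by
  rw [powMeasure, powMeasure, withDensity_apply _ hB, withDensity_apply _ hB,
    Measure.restrict_restrict hB, ← lintegral_const_mul _ (measurable_powDensity q)]
  refine setLIntegral_mono' (hB.inter measurableSet_Ioi) fun t ⟨htB, ht0⟩ => ?_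
  rw [Set.mem_Ioi] at ht0
  have htτ : t ≤ τ := h htB
  rw [← ENNReal.ofReal_mul (rpow_nonneg (ht0.le.trans htτ) _),
    show -p - 1 = (q - p) + (-q - 1) by ring, rpow_add ht0]
  gcongr

theorem le_powMeasure_of_subset_Ioi (hτ : 0 < τ) (hpq : p ≤ q) (hB : MeasurableSet B)
    (h : B ⊆ Set.Ioi τ) :
    ENNReal.ofReal (τ ^ (q - p)) * powMeasure q B ≤ powMeasure p B := by
  rw [powMeasure, powMeasure, withDensity_apply _ hB, withDensity_apply _ hB,
    Measure.restrict_restrict hB, ← lintegral_const_mul _ (measurable_powDensity q)]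
  refine setLIntegral_mono' (hB.inter measurableSet_Ioi) fun t ⟨htB, ht0⟩ => ?_
  rw [Set.mem_Ioi] at ht0
  have hτt : τ < t := h htB
  rw [← ENNReal.ofReal_mul (rpow_nonneg hτ.le _),
    show -p - 1 = (q - p) + (-q - 1) by ring, rpow_add ht0]
  gcongr

theorem powMeasure_le_Ioi_of_le (hτ : 0 < τ) (hq : 0 < q) (hpq : p ≤ q) (hB : MeasurableSet B)
    (h : powMeasure q B ≤ powMeasure q (Set.Ioi τ)) :
    powMeasure p B ≤ powMeasure p (Set.Ioi τ) := by
  have hfin : powMeasure q (Set.Ioi τ ∩ B) ≠ ⊤ :=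
    measure_ne_top_of_subset Set.inter_subset_left
      (by rw [powMeasure_Ioi hq hτ]; exact ENNReal.ofReal_ne_top)
  rw [← measure_sdiff_add_inter B (measurableSet_Ioi (a := τ)),
    ← measure_sdiff_add_inter (Set.Ioi τ) hB, Set.inter_comm B] at h ⊢
  rw [ENNReal.add_le_add_iff_right hfin] at h
  have hIic : B \ Set.Ioi τ ⊆ Set.Iic τ := fun _ ht => Set.mem_Iic.2 (not_lt.1 ht.2)
  gcongr ?_ + _
  calc powMeasure p (B \ Set.Ioi τ)
      ≤ ENNReal.ofReal (τ ^ (q - p)) * powMeasure q (B \ Set.Ioi τ) :=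
        powMeasure_le_of_subset_Iic hpq (hB.diff measurableSet_Ioi) hIic
    _ ≤ ENNReal.ofReal (τ ^ (q - p)) * powMeasure q (Set.Ioi τ \ B) := by gcongr
    _ ≤ powMeasure p (Set.Ioi τ \ B) :=
        le_powMeasure_of_subset_Ioi hτ hpq (measurableSet_Ioi.diff hB) Set.sdiff_subset

end Comparison

section LowLevels

theorem exists_mem_Icc_of_abs_cos_lt {θ t : ℝ} (hθ : θ ≤ π) (ht : 0 ≤ t)
    (hcos : |cos t| < cos θ) :
    ∃ k : ℕ, t ∈ Set.Icc (π / 2 + π * k - (π / 2 - θ)) (π / 2 + π * k + (π / 2 - θ)) := by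
  have hmul : t / π * π = t := div_mul_cancel₀ t pi_pos.ne'
  have hfloor := Nat.floor_le (div_nonneg ht pi_pos.le)
  have hlt := Nat.lt_floor_add_one (t / π)
  set k := ⌊t / π⌋₊
  have hcosk : |cos (t - k * π)| < cos θ := by rwa [abs_cos_sub_nat_mul_pi]
  have hleft : θ < t - k * π := lt_of_abs_cos_lt_cos hθ (by nlinarith [pi_pos]) hcosk
  have hright : θ < π - (t - k * π) :=
    lt_of_abs_cos_lt_cos hθ (by nlinarith [pi_pos]) (by rwa [cos_pi_sub, abs_neg])
  exact ⟨k, by linarith, by linarith⟩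

variable {p : ℝ}

theorem tsum_powMeasure_Ioc_mul_pi_le (p : ℝ) :
    ∑' k : ℕ, powMeasure p (Set.Ioc (π * (k + 1 : ℕ)) (π * (k + 1 : ℕ) + π))
      ≤ powMeasure p (Set.Ioi π) := by
  have hmono : Monotone fun k : ℕ => π * (k + 1 : ℕ) := fun i j hij => by
    dsimp only
    gcongr
  have hdisj : Pairwise (Function.onFun Disjoint
      fun k : ℕ => Set.Ioc (π * (k + 1 : ℕ)) (π * (k + 1 : ℕ) + π)) := by
    convert hmono.pairwise_disjoint_on_Ioc_succ using 5 with k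
    simp only [Order.succ_eq_add_one, Nat.cast_add, Nat.cast_one]
    ring
  rw [← measure_iUnion hdisj fun _ => measurableSet_Ioc]
  refine measure_mono (Set.iUnion_subset fun k t ht => ?_)
  refine lt_of_le_of_lt (le_mul_of_one_le_right pi_pos.le ?_) ht.1
  exact_mod_cast k.succ_pos

theorem powMeasure_Icc_half_pi_le {θ u : ℝ} (hp : 0 < p) (h0 : 0 ≤ θ) (h1 : θ ≤ π / 2)
    (hu : 0 < u) :
    powMeasure p (Set.Icc (π / 2 + u - (π / 2 - θ)) (π / 2 + u + (π / 2 - θ)))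
      ≤ ENNReal.ofReal (1 - 2 * θ / π) * powMeasure p (Set.Ioc u (u + π)) := by
  have hpi := pi_pos
  have hc0 : 0 ≤ 1 - 2 * θ / π := by rw [sub_nonneg, div_le_one hpi]; linarith
  have hc : (1 - 2 * θ / π) * (π / 2) = π / 2 - θ := by field_simp
  have h := powMeasure_Icc_smul_le (m := π / 2 + u) hp pi_div_two_pos.le
    (lt_add_of_pos_right (π / 2) hu) hc0 (sub_le_self 1 (by positivity))
  rwa [hc, add_sub_cancel_left, show π / 2 + u + π / 2 = u + π by ring] at h

theorem powMeasure_abs_cos_lt_le {θ : ℝ} (hp : 0 < p) (h0 : 0 < θ) (h1 : θ < π / 2) :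
    powMeasure p {t | |cos t| < cos θ} ≤ ENNReal.ofReal
      ((θ ^ (-p) - (π - θ) ^ (-p) + (1 - 2 * θ / π) * π ^ (-p)) / p) := by
  have hpi := pi_pos
  have hc0 : 0 ≤ 1 - 2 * θ / π := by rw [sub_nonneg, div_le_one hpi]; linarith
  have hdiff : 0 ≤ θ ^ (-p) - (π - θ) ^ (-p) :=
    sub_nonneg.2 (rpow_le_rpow_of_nonpos h0 (by linarith) (by linarith))
  calc powMeasure p {t | |cos t| < cos θ}
      ≤ powMeasure p (⋃ k : ℕ,
          Set.Icc (π / 2 + π * k - (π / 2 - θ)) (π / 2 + π * k + (π / 2 - θ))) := by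
        refine measure_mono_ae ?_
        filter_upwards [powMeasure_ae_pos p] with t ht0 ht
        exact Set.mem_iUnion.2 (exists_mem_Icc_of_abs_cos_lt (by linarith) ht0.le ht)
    _ ≤ ∑' k : ℕ, powMeasure p (Set.Icc (π / 2 + π * k - (π / 2 - θ))
          (π / 2 + π * k + (π / 2 - θ))) := measure_iUnion_le _
    _ ≤ ENNReal.ofReal ((θ ^ (-p) - (π - θ) ^ (-p)) / p)
          + ENNReal.ofReal (1 - 2 * θ / π) * ENNReal.ofReal (π ^ (-p) / p) := by
        rw [tsum_eq_zero_add' ENNReal.summable, ← powMeasure_Ioi hp hpi]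
        gcongr
        · rw [Nat.cast_zero, mul_zero, add_zero, sub_sub_cancel, powMeasure_Icc hp h0 (by linarith)]
          ring_nf
          exact le_rfl
        · refine (ENNReal.tsum_le_tsum fun k =>
            powMeasure_Icc_half_pi_le hp h0.le h1.le (by positivity)).trans ?_
          rw [ENNReal.tsum_mul_left]
          gcongr
          exact tsum_powMeasure_Ioc_mul_pi_le p
    _ = _ := by
        rw [← ENNReal.ofReal_mul hc0, ← ENNReal.ofReal_add (by positivity) (by positivity)]
        ring_nf

theorem level_poly_le {v : ℝ} (h0 : 0 ≤ v) (h1 : v ≤ 1) :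
    (1296 + (9 - v ^ 2) ^ 2) * (0.6932 * v + (1 - v ^ 2) / 2) * 2 ≤ 29.6 * (9 - v ^ 2) ^ 2 := by
  obtain ⟨w, rfl⟩ : ∃ w, v = 1 - w := ⟨1 - v, by ring⟩
  have hw0 : 0 ≤ w := by linarith
  have hquad : 0 ≤ w ^ 2 * (1001 - 74 * w) := mul_nonneg (sq_nonneg w) (by linarith)
  have hquart : 0 ≤ w ^ 4 * (18 - 5 * w) := mul_nonneg (by positivity) (by linarith)
  nlinarith [pow_nonneg hw0 2, pow_nonneg hw0 3, pow_nonneg hw0 4, pow_nonneg hw0 5,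
    pow_nonneg hw0 6]

theorem half_le_cos {v : ℝ} (h0 : 0 ≤ v) (h1 : v ≤ 1) : v / 2 ≤ cos (π / 6 * (3 - v)) := by
  have hpi := pi_pos
  have := strictConcaveOn_sin_Icc.concaveOn.2 (x := 0) (y := π / 6) ⟨le_rfl, hpi.le⟩
    ⟨by positivity, by linarith⟩ (sub_nonneg.2 h1) h0 (sub_add_cancel 1 v)
  simp only [smul_eq_mul, mul_zero, sin_zero, zero_add, sin_pi_div_six] at this
  rw [← sin_pi_div_two_sub, show π / 2 - π / 6 * (3 - v) = v * (π / 6) by ring]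
  linarith

theorem mul_log_two_sub_log_le {v : ℝ} (h0 : 0 < v) (h1 : v ≤ 1) :
    v * (log 2 - log v) ≤ 0.6932 * v + (1 - v ^ 2) / 2 := by
  have hlog := log_le_half_sub_inv (x := v⁻¹) ((one_le_inv₀ h0).2 h1)
  rw [log_inv, inv_inv] at hlog
  have hmul : v * ((v⁻¹ - v) / 2) = (1 - v ^ 2) / 2 := by field_simp
  nlinarith [mul_le_mul_of_nonneg_left hlog h0.le, log_two_lt_d9]

theorem mul_gaussLevel_le_one_of_pi_div_three_le {θ : ℝ} (h0 : π / 3 ≤ θ) (h1 : θ < π / 2) :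
    (θ ^ (-2 : ℝ) - (π - θ) ^ (-2 : ℝ) + (1 - 2 * θ / π) * π ^ (-2 : ℝ)) * gaussLevel θ ≤ 1 := by
  have hpi := pi_pos
  obtain ⟨v, rfl⟩ : ∃ v, θ = π / 6 * (3 - v) := ⟨3 - 6 * θ / π, by field_simp; ring⟩
  have hv0 : 0 < v := by nlinarith
  have hv1 : v ≤ 1 := by nlinarith
  have hlevel : gaussLevel (π / 6 * (3 - v)) ≤ 2 * (log 2 - log v) := by
    have := log_le_log (by positivity) (half_le_cos hv0.le hv1)
    rw [log_div hv0.ne' two_ne_zero] at this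
    rw [gaussLevel]
    linarith
  have hmass : (π / 6 * (3 - v)) ^ (-2 : ℝ) - (π - π / 6 * (3 - v)) ^ (-2 : ℝ)
      + (1 - 2 * (π / 6 * (3 - v)) / π) * π ^ (-2 : ℝ)
      = v * (1296 + (9 - v ^ 2) ^ 2) / (3 * π ^ 2 * (9 - v ^ 2) ^ 2) := by
    have hsub : 0 < 3 - v := by linarith
    rw [show π - π / 6 * (3 - v) = π / 6 * (3 + v) by ring,
      show 9 - v ^ 2 = (3 - v) * (3 + v) by ring, rpow_neg (by positivity),
      rpow_neg (by positivity), rpow_neg hpi.le, rpow_two, rpow_two, rpow_two]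
    field_simp
    ring
  have h9 : 0 < 9 - v ^ 2 := by nlinarith
  have hpi_sq : 29.6 ≤ 3 * π ^ 2 := by nlinarith [pi_gt_d4]
  rw [hmass]
  refine (mul_le_mul_of_nonneg_left hlevel (by positivity)).trans ?_
  rw [div_mul_eq_mul_div, div_le_one (by positivity)]
  calc v * (1296 + (9 - v ^ 2) ^ 2) * (2 * (log 2 - log v))
      = (1296 + (9 - v ^ 2) ^ 2) * (v * (log 2 - log v)) * 2 := by ring
    _ ≤ (1296 + (9 - v ^ 2) ^ 2) * (0.6932 * v + (1 - v ^ 2) / 2) * 2 := by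
        gcongr
        exact mul_log_two_sub_log_le hv0 hv1
    _ ≤ 29.6 * (9 - v ^ 2) ^ 2 := level_poly_le hv0.le hv1
    _ ≤ 3 * π ^ 2 * (9 - v ^ 2) ^ 2 := by gcongr

theorem powMeasure_abs_cos_lt_le_gaussian_lt {θ : ℝ} (hp2 : p ≤ 2) (h0 : π / 3 ≤ θ)
    (h1 : θ < π / 2) :
    powMeasure p {t | |cos t| < cos θ} ≤ powMeasure p {t | exp (-(t ^ 2 / 2)) < cos θ} := by
  have hθ : 0 < θ := by linarith [pi_pos]
  have hL := gaussLevel_pos hθ h1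
  rw [powMeasure_gaussian_lt_eq_Ioi p hθ.le h1]
  refine powMeasure_le_Ioi_of_le (sqrt_pos.2 hL) two_pos hp2
    (measurableSet_lt (by fun_prop) (by fun_prop)) ?_
  rw [← powMeasure_gaussian_lt_eq_Ioi 2 hθ.le h1, powMeasure_gaussian_lt two_pos hθ h1]
  refine (powMeasure_abs_cos_lt_le two_pos hθ h1).trans ?_
  gcongr
  rw [div_self two_ne_zero, rpow_neg_one, ← one_div, le_div_iff₀ hL]
  exact mul_gaussLevel_le_one_of_pi_div_three_le h0 h1

end LowLevels

section CosinePower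

theorem arccos_one_half : arccos (1 / 2) = π / 3 := by
  rw [← cos_pi_div_three, arccos_cos (by positivity) (by linarith [pi_pos])]

variable {p : ℝ}

theorem powMeasure_abs_cos_lt_le_of_le_half {y : ℝ} (hp2 : p ≤ 2) (h0 : 0 < y) (h1 : y ≤ 1 / 2) :
    powMeasure p {t | |cos t| < y} ≤ powMeasure p {t | exp (-(t ^ 2 / 2)) < y} := by
  have h := powMeasure_abs_cos_lt_le_gaussian_lt hp2
    (arccos_one_half ▸ antitone_arccos h1) (arccos_lt_pi_div_two.2 h0)
  rwa [cos_arccos (by linarith) (by linarith)] at h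

theorem powMeasure_gaussian_lt_le_of_half_le {y z : ℝ} (hp : 7 / 4 ≤ p) (hp2 : p ≤ 2)
    (hz : 1 / 2 ≤ z) (hzy : z ≤ y) (hy : y < 1)
    (h : powMeasure p {t | exp (-(t ^ 2 / 2)) < z} ≤ powMeasure p {t | |cos t| < z}) :
    powMeasure p {t | exp (-(t ^ 2 / 2)) < y} ≤ powMeasure p {t | |cos t| < y} := by
  have hcosz : cos (arccos z) = z := cos_arccos (by linarith) (by linarith)
  have h' := powMeasure_gaussian_lt_le_of_le hp hp2 (arccos_pos.2 hy) (antitone_arccos hzy)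
    (arccos_one_half ▸ antitone_arccos hz) (by rwa [hcosz])
  rwa [cos_arccos (by linarith) hy.le] at h'

theorem exists_crossing_level (hp : 7 / 4 ≤ p) (hp2 : p ≤ 2) : ∃ y₀ : ℝ, 0 < y₀ ∧
    (∀ y, 0 < y → y < 1 → y < y₀ →
      powMeasure p {t | |cos t| < y} ≤ powMeasure p {t | exp (-(t ^ 2 / 2)) < y}) ∧
    (∀ y, 0 < y → y < 1 → y₀ < y →
      powMeasure p {t | exp (-(t ^ 2 / 2)) < y} ≤ powMeasure p {t | |cos t| < y}) := by
  set S : Set ℝ := {y | 1 / 2 < y ∧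
    (y < 1 → powMeasure p {t | exp (-(t ^ 2 / 2)) < y} ≤ powMeasure p {t | |cos t| < y})}
  have hne : S.Nonempty := ⟨1, by norm_num, fun h => absurd h (lt_irrefl 1)⟩
  have hbdd : BddBelow S := ⟨1 / 2, fun y hy => hy.1.le⟩
  refine ⟨sInf S, one_half_pos.trans_le (le_csInf hne fun y hy => hy.1.le), ?_, ?_⟩
  · intro y h0 _ hy
    rcases le_or_gt y (1 / 2) with h | h
    · exact powMeasure_abs_cos_lt_le_of_le_half hp2 h0 h
    · by_contra! hlt
      exact absurd (csInf_le hbdd ⟨h, fun _ => hlt.le⟩) (not_le.2 hy)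
  · intro y _ h1 hy
    obtain ⟨z, hz, hzy⟩ := exists_lt_of_csInf_lt hne hy
    exact powMeasure_gaussian_lt_le_of_half_le hp hp2 hz.1.le hzy.le h1 (hz.2 (hzy.trans h1))

theorem exp_neg_sq_div_two_rpow {s : ℝ} (hs : 0 ≤ s) (t : ℝ) :
    exp (-(t ^ 2 / 2)) ^ s = exp (-((√s * t) ^ 2 / 2)) := by
  rw [← exp_mul, mul_pow, sq_sqrt hs]
  ring_nf

theorem integrable_one_sub_gaussian_rpow (hp0 : 0 < p) (hp2 : p < 2) {s : ℝ} (hs : 0 ≤ s) :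
    Integrable (fun t => 1 - exp (-(t ^ 2 / 2)) ^ s) (powMeasure p) := by
  simp_rw [exp_neg_sq_div_two_rpow hs]
  refine integrable_powMeasure hp0 hp2 (by fun_prop) (c := s / 2) (d := 1) (fun t => ?_)
    fun t => ?_ <;> rw [abs_of_nonneg (sub_nonneg.2 (exp_neg_sq_div_two_le_one _))]
  · have := add_one_le_exp (-((√s * t) ^ 2 / 2))
    rw [mul_pow, sq_sqrt hs] at this ⊢
    linarith
  · exact sub_le_self 1 (exp_pos _).le

theorem integral_one_sub_gaussian_rpow (hp0 : 0 < p) (hp2 : p < 2) {s : ℝ} (hs : 0 < s) :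
    ∫ t, (1 - exp (-(t ^ 2 / 2)) ^ s) ∂powMeasure p
      = s ^ (p / 2) * (gaussMoment p * cosConst p) := by
  simp_rw [exp_neg_sq_div_two_rpow hs.le]
  rw [integral_powMeasure_comp_mul (fun t => 1 - exp (-(t ^ 2 / 2))) (sqrt_pos.2 hs),
    integral_one_sub_gaussian hp0 hp2, sqrt_eq_rpow, ← rpow_mul hs.le]
  ring_nf

theorem abs_cos_rpow_le_one {s : ℝ} (hs : 0 ≤ s) (t : ℝ) : |cos t| ^ s ≤ 1 :=
  rpow_le_one (abs_nonneg _) (abs_cos_le_one t) hs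

theorem one_sub_abs_cos_rpow_le {s : ℝ} (hs : 1 ≤ s) (t : ℝ) : 1 - |cos t| ^ s ≤ s / 2 * t ^ 2 := by
  have hbernoulli := one_add_mul_self_le_rpow_one_add (s := |cos t| - 1)
    (by linarith [abs_nonneg (cos t)]) hs
  rw [add_sub_cancel] at hbernoulli
  have hcos : 1 - t ^ 2 / 2 ≤ |cos t| := one_sub_sq_div_two_le_cos.trans (le_abs_self _)
  nlinarith

theorem integrable_one_sub_abs_cos_mul_rpow (hp0 : 0 < p) (hp2 : p < 2) {s : ℝ} (hs : 1 ≤ s)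
    (a : ℝ) : Integrable (fun t => 1 - |cos (a * t)| ^ s) (powMeasure p) := by
  have hs0 : 0 ≤ s := by linarith
  refine integrable_powMeasure hp0 hp2 (Measurable.const_sub (by fun_prop) _)
    (c := s / 2 * a ^ 2) (d := 1) (fun t => ?_) fun t => ?_ <;>
    rw [abs_of_nonneg (sub_nonneg.2 (abs_cos_rpow_le_one hs0 _))]
  · exact (one_sub_abs_cos_rpow_le hs (a * t)).trans_eq (by ring)
  · exact sub_le_self 1 (by positivity)

theorem integral_one_sub_abs_cos_sq (hp0 : 0 < p) :
    ∫ t, (1 - |cos t| ^ (2 : ℝ)) ∂powMeasure p = 2 ^ (p - 1) * cosConst p := by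
  have hdouble : ∀ t : ℝ, 1 - |cos t| ^ (2 : ℝ) = (1 / 2) * (1 - cos (2 * t)) := by
    intro t
    rw [rpow_two, sq_abs, cos_two_mul]
    ring
  simp_rw [hdouble]
  rw [integral_const_mul, integral_one_sub_cos_mul hp0, abs_two, rpow_sub_one two_ne_zero]
  ring

theorem lintegral_one_sub_rpow_div_eq_ofReal {α : Type*} [MeasurableSpace α] {μ : Measure α}
    {f : α → ℝ} {r : ℝ} (hr : 0 ≤ r) (hf0 : ∀ t, 0 ≤ f t) (hf1 : ∀ t, f t ≤ 1)
    (hint : Integrable (fun t => 1 - f t ^ r) μ) :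
    ∫⁻ t, ENNReal.ofReal ((1 - f t ^ r) / r) ∂μ
      = ENNReal.ofReal ((∫ t, (1 - f t ^ r) ∂μ) / r) := by
  rw [← integral_div, ofReal_integral_eq_lintegral_ofReal (hint.div_const r)]
  exact Eventually.of_forall fun t =>
    div_nonneg (sub_nonneg.2 (rpow_le_one (hf0 t) (hf1 t) hr)) hr

theorem le_integral_one_sub_abs_cos_rpow (hp : 7 / 4 ≤ p) (hp2 : p < 2)
    (hG : gaussMoment p ≤ 2 ^ (p / 2 - 1)) {s : ℝ} (hs : 2 ≤ s) :
    s ^ (p / 2) * (gaussMoment p * cosConst p) ≤ ∫ t, (1 - |cos t| ^ s) ∂powMeasure p := by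
  have hp0 : 0 < p := by linarith
  have hs0 : 0 < s := by linarith
  have hcos : ∀ r : ℝ, 2 ≤ r → ∫⁻ t, ENNReal.ofReal ((1 - |cos t| ^ r) / r) ∂powMeasure p
      = ENNReal.ofReal ((∫ t, (1 - |cos t| ^ r) ∂powMeasure p) / r) := fun r hr =>
    lintegral_one_sub_rpow_div_eq_ofReal (by linarith) (fun _ => abs_nonneg _) abs_cos_le_one
      (by simpa using integrable_one_sub_abs_cos_mul_rpow hp0 hp2 (s := r) (by linarith) 1)
  have hgauss : ∀ r : ℝ, 2 ≤ r → ∫⁻ t, ENNReal.ofReal ((1 - exp (-(t ^ 2 / 2)) ^ r) / r)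
      ∂powMeasure p = ENNReal.ofReal (r ^ (p / 2) * (gaussMoment p * cosConst p) / r) := by
    intro r hr
    rw [← integral_one_sub_gaussian_rpow hp0 hp2 (by linarith)]
    exact lintegral_one_sub_rpow_div_eq_ofReal (by linarith) (fun _ => (exp_pos _).le)
      exp_neg_sq_div_two_le_one (integrable_one_sub_gaussian_rpow hp0 hp2 (by linarith))
  have htwo : 2 ^ (p / 2) * (gaussMoment p * cosConst p)
      ≤ ∫ t, (1 - |cos t| ^ (2 : ℝ)) ∂powMeasure p := by
    rw [integral_one_sub_abs_cos_sq hp0, ← mul_assoc]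
    refine mul_le_mul_of_nonneg_right ?_ (cosConst_pos hp0 hp2).le
    calc (2 : ℝ) ^ (p / 2) * gaussMoment p ≤ 2 ^ (p / 2) * 2 ^ (p / 2 - 1) := by gcongr
      _ = 2 ^ (p - 1) := by rw [← rpow_add two_pos]; ring_nf
  obtain ⟨y₀, hy₀, hlt, hgt⟩ := exists_crossing_level hp hp2.le
  have key := lintegral_one_sub_rpow_le_of_crossing two_pos hs (by fun_prop)
    (fun t => abs_nonneg (cos t)) abs_cos_le_one (by fun_prop)
    (fun t => (exp_pos (-(t ^ 2 / 2))).le) exp_neg_sq_div_two_le_one hy₀ hlt hgt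
    (by rw [hcos 2 le_rfl]; exact ENNReal.ofReal_ne_top)
    (by rw [hcos 2 le_rfl, hgauss 2 le_rfl]; gcongr)
  rw [hcos s hs, hgauss s hs, ENNReal.ofReal_le_ofReal_iff] at key
  · exact (div_le_div_iff_of_pos_right hs0).1 key
  · exact div_nonneg (integral_nonneg fun t => sub_nonneg.2 (abs_cos_rpow_le_one hs0.le t)) hs0.le

theorem integrable_sq_mul_one_sub_abs_cos_rpow (hp0 : 0 < p) (hp2 : p < 2) {a : ℝ}
    (ha : a ^ 2 ≤ 1) :
    Integrable (fun t => a ^ 2 * (1 - |cos (a * t)| ^ (a ^ 2)⁻¹)) (powMeasure p) := by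
  rcases eq_or_ne a 0 with rfl | ha0
  · simp
  · have hs : 1 ≤ (a ^ 2)⁻¹ := (one_le_inv₀ (by positivity)).2 ha
    exact (integrable_one_sub_abs_cos_mul_rpow hp0 hp2 hs a).const_mul _

theorem sq_mul_le_integral_one_sub_abs_cos_rpow (hp : 7 / 4 ≤ p) (hp2 : p < 2)
    (hG : gaussMoment p ≤ 2 ^ (p / 2 - 1)) {a : ℝ} (ha : 2 * a ^ 2 ≤ 1) :
    a ^ 2 * (gaussMoment p * cosConst p)
      ≤ ∫ t, a ^ 2 * (1 - |cos (a * t)| ^ (a ^ 2)⁻¹) ∂powMeasure p := by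
  rcases eq_or_ne a 0 with rfl | ha0
  · simp
  have ha2 : 0 < a ^ 2 := by positivity
  have hs : 2 ≤ (a ^ 2)⁻¹ := by
    rw [le_inv_comm₀ two_pos ha2]
    linarith
  have habs : ∀ t, |cos (a * t)| = |cos (|a| * t)| := fun t => by
    rcases abs_choice a with h | h <;> simp [h]
  have hscale : |a| ^ p * ((a ^ 2)⁻¹) ^ (p / 2) = 1 := by
    rw [inv_rpow ha2.le, sq_rpow_half]
    exact mul_inv_cancel₀ (by positivity)
  simp_rw [habs]
  rw [integral_const_mul, integral_powMeasure_comp_mul (fun t => 1 - |cos t| ^ (a ^ 2)⁻¹)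
    (abs_pos.2 ha0)]
  gcongr a ^ 2 * ?_
  calc gaussMoment p * cosConst p
      = |a| ^ p * (((a ^ 2)⁻¹) ^ (p / 2) * (gaussMoment p * cosConst p)) := by
        rw [← mul_assoc, hscale, one_mul]
    _ ≤ _ := by
        gcongr
        exact le_integral_one_sub_abs_cos_rpow hp hp2 hG hs

theorem sum_sq_mul_le_one_sub_prod_cos {l : List ℝ} (hl : sumSq l = 1) (t : ℝ) :
    ∑ i : Fin l.length, l[i.1] ^ 2 * (1 - |cos (l[i.1] * t)| ^ (l[i.1] ^ 2)⁻¹)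
      ≤ 1 - (l.map fun a => cos (a * t)).prod := by
  rw [sumSq_eq_sum_getElem] at hl
  have hamgm := geom_mean_le_arith_mean_weighted Finset.univ (fun i : Fin l.length => l[i.1] ^ 2)
    (fun i => |cos (l[i.1] * t)| ^ (l[i.1] ^ 2)⁻¹) (fun i _ => sq_nonneg _) hl
    (fun i _ => by positivity)
  have hpow : ∀ a : ℝ, (|cos (a * t)| ^ (a ^ 2)⁻¹) ^ (a ^ 2) = |cos (a * t)| := by
    intro a
    rcases eq_or_ne a 0 with rfl | ha
    · simp
    · exact rpow_inv_rpow (abs_nonneg _) (by positivity)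
  simp only [hpow] at hamgm
  rw [← Finset.abs_prod, Fin.prod_univ_fun_getElem l (fun a => cos (a * t))] at hamgm
  simp only [mul_sub, mul_one, Finset.sum_sub_distrib, hl]
  linarith [le_abs_self (l.map fun a => cos (a * t)).prod]

theorem gaussMoment_le_radMoment (hp : 7 / 4 ≤ p) (hp2 : p < 2)
    (hG : gaussMoment p ≤ 2 ^ (p / 2 - 1)) {l : List ℝ} (hl : sumSq l = 1)
    (hbal : ∀ a ∈ l, 2 * a ^ 2 ≤ 1) : gaussMoment p ≤ radMoment p l 0 := by
  have hp0 : 0 < p := by linarith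
  have hint := integrable_one_sub_radAvg_cos hp0 hp2 l 0
  have hmoment := integral_one_sub_radAvg_cos hp0 hp2 l 0
  simp only [radAvg_cos, zero_mul, cos_zero, one_mul] at hint hmoment
  have hbal' := fun i : Fin l.length => hbal _ (l.getElem_mem i.2)
  have hterm := fun i => integrable_sq_mul_one_sub_abs_cos_rpow hp0 hp2 (a := l[Fin.val i])
    (by linarith [hbal' i, sq_nonneg l[i.1]])
  refine le_of_mul_le_mul_right ?_ (cosConst_pos hp0 hp2)
  rw [← hmoment]
  calc gaussMoment p * cosConst p
      = ∑ i : Fin l.length, l[i.1] ^ 2 * (gaussMoment p * cosConst p) := by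
        rw [← Finset.sum_mul, ← sumSq_eq_sum_getElem, hl, one_mul]
    _ ≤ ∑ i : Fin l.length, ∫ t, l[i.1] ^ 2 * (1 - |cos (l[i.1] * t)| ^ (l[i.1] ^ 2)⁻¹)
          ∂powMeasure p := Finset.sum_le_sum fun i _ =>
        sq_mul_le_integral_one_sub_abs_cos_rpow hp hp2 hG (hbal' i)
    _ = ∫ t, ∑ i : Fin l.length, l[i.1] ^ 2 * (1 - |cos (l[i.1] * t)| ^ (l[i.1] ^ 2)⁻¹)
          ∂powMeasure p := (integral_finsetSum _ fun i _ => hterm i).symm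
    _ ≤ _ := integral_mono (integrable_finsetSum _ fun i _ => hterm i) hint
        (sum_sq_mul_le_one_sub_prod_cos hl)

theorem gaussMoment_mul_rpow_sumSq_le_radMoment (hp : 7 / 4 ≤ p) (hp2 : p < 2)
    (hG : gaussMoment p ≤ 2 ^ (p / 2 - 1)) (l : List ℝ) :
    gaussMoment p * sumSq l ^ (p / 2) ≤ radMoment p l 0 := by
  have hp0 : 0 < p := by linarith
  refine mul_rpow_sumSq_le_radMoment hp0.le hp2.le (gaussMoment_pos hp0).le
    (fun a ha => mul_symPow_le_radMoment_singleton hp0 hp2.le hG ha) (fun l hbal => ?_) l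
  refine mul_rpow_sumSq_le_radMoment_of_normalized hp0 one_pos fun c hc => ?_
  rw [one_rpow, mul_one]
  refine gaussMoment_le_radMoment hp hp2 hG hc fun b hb => ?_
  obtain ⟨a, ha, rfl⟩ := List.mem_map.1 hb
  rw [← hc, sumSq_map_mul, mul_pow, mul_left_comm]
  exact mul_le_mul_of_nonneg_left (hbal a ha) (sq_nonneg c)

end CosinePower

section SharpConstant

theorem gaussMoment_le_of_Gamma_le {p : ℝ} (h : Gamma ((p + 1) / 2) ≤ √π / 2) :
    gaussMoment p ≤ 2 ^ (p / 2 - 1) := by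
  rw [gaussMoment, rpow_sub_one two_ne_zero, div_le_iff₀ (by positivity)]
  calc (2 : ℝ) ^ (p / 2) * Gamma ((p + 1) / 2) ≤ 2 ^ (p / 2) * (√π / 2) := by gcongr
    _ = _ := by ring

theorem gaussMoment_eq_of_Gamma_eq {q : ℝ} (hq : Gamma ((q + 1) / 2) = √π / 2) :
    gaussMoment q = 2 ^ (q / 2 - 1) := by
  rw [gaussMoment, hq, rpow_sub_one two_ne_zero]
  field_simp

theorem two_rpow_mul_half_rpow (r : ℝ) : (2 : ℝ) ^ (r / 2 - 1) * (1 / 2) ^ (r / 2) = 1 / 2 := by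
  rw [rpow_sub_one two_ne_zero, div_mul_eq_mul_div, ← mul_rpow zero_le_two (by norm_num),
    mul_one_div_cancel two_ne_zero, one_rpow]

theorem exists_abs_rpow_le_add_sq {q r : ℝ} (hr : 0 ≤ r) (hrq : r ≤ q) (hq2 : q < 2) :
    ∃ c > 0, ∀ s : ℝ, |s| ^ q ≤ c * |s| ^ r + (1 - c) * s ^ 2 := by
  have hr2 : 0 < 2 - r := by linarith
  obtain ⟨c, hc⟩ : ∃ c, c * (2 - r) = 2 - q := ⟨_, div_mul_cancel₀ _ hr2.ne'⟩
  have hc0 : 0 < c := by nlinarith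
  have hc1 : c ≤ 1 := by nlinarith
  refine ⟨c, hc0, fun s => ?_⟩
  calc |s| ^ q = |s| ^ (r * c + 2 * (1 - c)) := by congr 1; linarith
    _ = (|s| ^ r) ^ c * (s ^ 2) ^ (1 - c) := by
        rw [rpow_add_of_nonneg (abs_nonneg s) (by positivity) (by linarith),
          rpow_mul (abs_nonneg s), rpow_mul (abs_nonneg s), rpow_two, sq_abs]
    _ ≤ _ := geom_mean_le_arith_mean2_weighted hc0.le (by linarith) (by positivity)
        (sq_nonneg s) (by ring)

-- The constant `2 ^ (r / 2 - 1)` is attained at `sumSq l = 1 / 2` for every `r`, by `[1/2, 1/2]`,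
-- so the interpolation between `r` and `2` loses nothing after this normalization.
theorem two_rpow_mul_rpow_sumSq_le_radMoment_of_le {q r : ℝ} (hr : 0 < r) (hrq : r ≤ q)
    (hq2 : q < 2) (hq : ∀ l, 2 ^ (q / 2 - 1) * sumSq l ^ (q / 2) ≤ radMoment q l 0)
    (l : List ℝ) : 2 ^ (r / 2 - 1) * sumSq l ^ (r / 2) ≤ radMoment r l 0 := by
  obtain ⟨c, hc0, hc⟩ := exists_abs_rpow_le_add_sq hr.le hrq hq2
  refine mul_rpow_sumSq_le_radMoment_of_normalized hr one_half_pos fun a ha => ?_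
  have hle : radMoment q (l.map (a * ·)) 0
      ≤ c * radMoment r (l.map (a * ·)) 0 + (1 - c) * (1 / 2) := by
    have h := radAvg_mono hc (l.map (a * ·)) 0
    rwa [radAvg_add, radAvg_const_mul, radAvg_const_mul, radAvg_sq, ha, zero_pow two_ne_zero,
      zero_add] at h
  have hhalf := hq (l.map (a * ·))
  rw [ha, two_rpow_mul_half_rpow] at hhalf
  rw [two_rpow_mul_half_rpow]
  exact le_of_mul_le_mul_left (by linarith) hc0

theorem khintchineP0_nonneg : 0 ≤ khintchineP0 :=
  sInf_nonneg fun _ hp => zero_le_one.trans hp.1.le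

theorem exists_Gamma_eq_khintchineP0_le :
    ∃ q, 1 < q ∧ q < 2 ∧ Gamma ((q + 1) / 2) = √π / 2 ∧ khintchineP0 ≤ q := by
  obtain ⟨q, hq⟩ := exists_Gamma_eq
  exact ⟨q, hq.1, hq.2.1, hq.2.2, csInf_le ⟨1, fun p hp => hp.1.le⟩ hq⟩

theorem khintchineA_nonneg (r : ℝ) : 0 ≤ khintchineA r := by
  unfold khintchineA
  split_ifs with h
  · positivity
  · have : 0 < r := khintchineP0_nonneg.trans_lt (not_le.1 h)
    positivity
  · exact zero_le_one

theorem khintchineA_of_two_le {r : ℝ} (hr : 2 ≤ r) : khintchineA r = 1 := by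
  obtain ⟨q, -, hq2, -, hq⟩ := exists_Gamma_eq_khintchineP0_le
  rw [khintchineA, if_neg (by linarith), if_neg (by linarith)]

theorem khintchineA_rpow_of_le {r : ℝ} (hr : 0 < r) (h : r ≤ khintchineP0) :
    khintchineA r ^ r = (2 ^ (r / 2 - 1))⁻¹ := by
  rw [khintchineA, if_pos h, ← rpow_mul zero_le_two, ← rpow_neg zero_le_two]
  congr 1
  field_simp
  ring

theorem khintchineA_rpow_of_lt {r : ℝ} (h : khintchineP0 < r) (hr : r < 2) :
    khintchineA r ^ r = (gaussMoment r)⁻¹ := by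
  have hr0 : 0 < r := khintchineP0_nonneg.trans_lt h
  rw [khintchineA, if_neg h.not_ge, if_pos hr, mul_rpow (by positivity) (by positivity),
    ← rpow_mul (by positivity), show -(1 / r) * r = -1 by field_simp, rpow_neg_one,
    div_rpow zero_le_one (sqrt_nonneg 2), one_rpow, ← rpow_div_two_eq_sqrt r zero_le_two,
    gaussMoment]
  field_simp

theorem rpow_sumSq_le_radMoment {r : ℝ} (hr : 0 < r) (hr2 : r < 2) (l : List ℝ) :
    sumSq l ^ (r / 2) ≤ khintchineA r ^ r * radMoment r l 0 := by
  rcases le_or_gt r khintchineP0 with h | h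
  · obtain ⟨q, hq1, hq2, hq, hP0⟩ := exists_Gamma_eq_khintchineP0_le
    rw [khintchineA_rpow_of_le hr h, le_inv_mul_iff₀ (by positivity)]
    refine two_rpow_mul_rpow_sumSq_le_radMoment_of_le hr (h.trans hP0) hq2 (fun l => ?_) l
    rw [← gaussMoment_eq_of_Gamma_eq hq]
    exact gaussMoment_mul_rpow_sumSq_le_radMoment (seven_quarters_le (by linarith) hq) hq2
      (gaussMoment_eq_of_Gamma_eq hq).le l
  · obtain ⟨q, ⟨hq1, -, hq⟩, hqr⟩ := exists_lt_of_csInf_lt exists_Gamma_eq h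
    have hq1' : -1 < q := by linarith
    rw [khintchineA_rpow_of_lt h hr2, le_inv_mul_iff₀ (gaussMoment_pos hr)]
    exact gaussMoment_mul_rpow_sumSq_le_radMoment ((seven_quarters_le hq1' hq).trans hqr.le) hr2
      (gaussMoment_le_of_Gamma_le (Gamma_le_of_mem_Icc hq1' hq hqr.le hr2.le)) l

end SharpConstant

section HilbertValued

theorem Lp_midpoint_le {ι : Type*} [Fintype ι] {q : ℝ} (hq : 1 ≤ q) (u v : ι → ℝ) :
    (∑ j, |(u j + v j) / 2| ^ q) ^ (1 / q)
      ≤ ((∑ j, |u j| ^ q) ^ (1 / q) + (∑ j, |v j| ^ q) ^ (1 / q)) / 2 := by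
  have hhalf : ∀ w : ι → ℝ, (∑ j, |w j / 2| ^ q) ^ (1 / q) = (∑ j, |w j| ^ q) ^ (1 / q) / 2 := by
    intro w
    simp only [abs_div, abs_two, div_rpow (abs_nonneg _) zero_le_two, ← Finset.sum_div]
    rw [div_rpow (by positivity) (by positivity), ← rpow_mul zero_le_two,
      mul_one_div_cancel (by positivity), rpow_one]
  calc (∑ j, |(u j + v j) / 2| ^ q) ^ (1 / q) = (∑ j, |u j / 2 + v j / 2| ^ q) ^ (1 / q) := by
        simp only [add_div]
    _ ≤ _ := Real.Lp_add_le Finset.univ (fun j => u j / 2) (fun j => v j / 2) hq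
    _ = _ := by rw [hhalf, hhalf, add_div]

theorem abs_midpoint_rpow_le {q : ℝ} (hq : 1 ≤ q) (s t : ℝ) :
    |(s + t) / 2| ^ q ≤ (|s| ^ q + |t| ^ q) / 2 := by
  have hconv := (convexOn_rpow hq).2 (abs_nonneg s) (abs_nonneg t) one_half_pos.le one_half_pos.le
    (add_halves 1)
  simp only [smul_eq_mul] at hconv
  calc |(s + t) / 2| ^ q ≤ (1 / 2 * |s| + 1 / 2 * |t|) ^ q := by
        gcongr
        rw [abs_div, abs_two]
        linarith [abs_add_le s t]
    _ ≤ _ := hconv.trans_eq (by ring)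

theorem abs_radAvg_rpow_le {E : Type*} [AddCommGroup E] {q : ℝ} (hq : 1 ≤ q) (f : E → ℝ)
    (l : List E) (x : E) : |radAvg f l x| ^ q ≤ radAvg (fun y => |f y| ^ q) l x :=
  map_radAvg_le (N := fun u : Unit → ℝ => |u ()| ^ q)
    (fun u v => abs_midpoint_rpow_le hq (u ()) (v ())) (fun _ => f) l x

variable {ι : Type*} [Fintype ι] {r : ℝ}

theorem radAvg_sum_sq {n : ℕ} (c : Fin n → ι → ℝ) :
    radAvg (fun x : ι → ℝ => ∑ j, x j ^ 2) (List.ofFn c) 0 = ∑ j, ∑ i, c i j ^ 2 := by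
  rw [radAvg_sum]
  refine Finset.sum_congr rfl fun j _ => ?_
  rw [radAvg_eval_ofFn j (fun s : ℝ => s ^ 2), radAvg_sq, sumSq_ofFn, zero_pow two_ne_zero,
    zero_add]

theorem rpow_sum_radAvg_rpow_le (hr : 0 < r) (hr2 : r ≤ 2) (l : List (ι → ℝ)) :
    (∑ j, radAvg (fun x : ι → ℝ => |x j| ^ r) l 0 ^ (2 / r)) ^ (r / 2)
      ≤ radAvg (fun x : ι → ℝ => (∑ j, x j ^ 2) ^ (r / 2)) l 0 := by
  have h := map_radAvg_le (N := fun u : ι → ℝ => (∑ j, |u j| ^ (2 / r)) ^ (1 / (2 / r)))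
    (Lp_midpoint_le ((one_le_div hr).2 hr2)) (fun j (x : ι → ℝ) => |x j| ^ r) l 0
  have hsq : ∀ t : ℝ, (|t| ^ r) ^ (2 / r) = t ^ 2 := fun t => by
    rw [← rpow_mul (abs_nonneg t), mul_div_cancel₀ _ hr.ne', rpow_two, sq_abs]
  have hnn : ∀ j, 0 ≤ radAvg (fun x : ι → ℝ => |x j| ^ r) l 0 :=
    fun j => radAvg_nonneg (fun x => by positivity) l 0
  simpa only [one_div_div, abs_of_nonneg (hnn _), abs_rpow_of_nonneg (abs_nonneg _), abs_abs,
    hsq] using h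

theorem rpow_sum_sq_le_radAvg_of_lt_two (hr : 0 < r) (hr2 : r < 2) {n : ℕ} (c : Fin n → ι → ℝ) :
    (∑ j, ∑ i, c i j ^ 2) ^ (r / 2)
      ≤ khintchineA r ^ r * radAvg (fun x : ι → ℝ => (∑ j, x j ^ 2) ^ (r / 2)) (List.ofFn c) 0 := by
  have hA : 0 ≤ khintchineA r ^ r := rpow_nonneg (khintchineA_nonneg r) r
  have hcancel : ∀ t : ℝ, 0 ≤ t → (t ^ (2 / r)) ^ (r / 2) = t := fun t ht => by
    rw [← inv_div r 2, rpow_inv_rpow ht (by positivity)]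
  have hnn : ∀ j, 0 ≤ radAvg (fun x : ι → ℝ => |x j| ^ r) (List.ofFn c) 0 :=
    fun j => radAvg_nonneg (fun x => by positivity) _ _
  have hcoord : ∀ j, ∑ i, c i j ^ 2
      ≤ (khintchineA r ^ r) ^ (2 / r)
        * radAvg (fun x : ι → ℝ => |x j| ^ r) (List.ofFn c) 0 ^ (2 / r) := by
    intro j
    have h := rpow_sumSq_le_radMoment hr hr2 (List.ofFn fun i => c i j)
    rw [sumSq_ofFn, radMoment, ← radAvg_eval_ofFn j (fun s : ℝ => |s| ^ r)] at h
    rw [← mul_rpow hA (hnn j), ← inv_div r 2]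
    exact (le_rpow_inv_iff_of_pos (by positivity) (mul_nonneg hA (hnn j)) (by positivity)).2 h
  calc (∑ j, ∑ i, c i j ^ 2) ^ (r / 2)
      ≤ ((khintchineA r ^ r) ^ (2 / r) *
          ∑ j, radAvg (fun x : ι → ℝ => |x j| ^ r) (List.ofFn c) 0 ^ (2 / r)) ^ (r / 2) := by
        rw [Finset.mul_sum]
        gcongr
        exact hcoord _
    _ = khintchineA r ^ r *
          (∑ j, radAvg (fun x : ι → ℝ => |x j| ^ r) (List.ofFn c) 0 ^ (2 / r)) ^ (r / 2) := by
        rw [mul_rpow (by positivity) (Finset.sum_nonneg fun j _ => rpow_nonneg (hnn j) _),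
          hcancel _ hA]
    _ ≤ _ := mul_le_mul_of_nonneg_left (rpow_sum_radAvg_rpow_le hr hr2.le _) hA

theorem rpow_sum_sq_le_radAvg_of_two_le (hr : 2 ≤ r) {n : ℕ} (c : Fin n → ι → ℝ) :
    (∑ j, ∑ i, c i j ^ 2) ^ (r / 2)
      ≤ radAvg (fun x : ι → ℝ => (∑ j, x j ^ 2) ^ (r / 2)) (List.ofFn c) 0 := by
  have hnn : ∀ x : ι → ℝ, 0 ≤ ∑ j, x j ^ 2 := fun x => by positivity
  have h := abs_radAvg_rpow_le ((one_le_div two_pos).2 hr) (fun x : ι → ℝ => ∑ j, x j ^ 2)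
    (List.ofFn c) 0
  rw [radAvg_sum_sq, abs_of_nonneg (by positivity)] at h
  simpa only [abs_of_nonneg (hnn _)] using h

theorem rpow_sum_sq_le_radAvg (hr : 0 < r) {n : ℕ} (c : Fin n → ι → ℝ) :
    (∑ j, ∑ i, c i j ^ 2) ^ (r / 2)
      ≤ khintchineA r ^ r * radAvg (fun x : ι → ℝ => (∑ j, x j ^ 2) ^ (r / 2)) (List.ofFn c) 0 := by
  rcases lt_or_ge r 2 with h | h
  · exact rpow_sum_sq_le_radAvg_of_lt_two hr h c
  · rw [khintchineA_of_two_le h, one_rpow, one_mul]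
    exact rpow_sum_sq_le_radAvg_of_two_le h c

theorem exists_signs_sum_rpow_le {κ : Type*} [Fintype κ] (hr : 0 < r) {n : ℕ}
    (c : Fin n → κ → ι → ℝ) :
    ∃ ε : Fin n → ℝ, (∀ i, |ε i| ≤ 1) ∧
      ∑ a, (∑ j, ∑ i, c i a j ^ 2) ^ (r / 2)
        ≤ khintchineA r ^ r * ∑ a, (∑ j, (∑ i, ε i * c i a j) ^ 2) ^ (r / 2) := by
  have hA : 0 ≤ khintchineA r ^ r := rpow_nonneg (khintchineA_nonneg r) r
  set f : (κ → ι → ℝ) → ℝ := fun x => ∑ a, (∑ j, x a j ^ 2) ^ (r / 2)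
  obtain ⟨ε, hε, hle⟩ := exists_signs_radAvg_le f c 0
  refine ⟨fun i => ε i, fun i => ?_, ?_⟩
  · rcases hε i with h | h <;> simp [h]
  calc ∑ a, (∑ j, ∑ i, c i a j ^ 2) ^ (r / 2)
      ≤ khintchineA r ^ r * radAvg f (List.ofFn c) 0 := by
        rw [radAvg_sum, Finset.mul_sum]
        refine Finset.sum_le_sum fun a _ => ?_
        rw [radAvg_eval_ofFn a fun x : ι → ℝ => (∑ j, x j ^ 2) ^ (r / 2)]
        exact rpow_sum_sq_le_radAvg hr fun i => c i a
    _ ≤ khintchineA r ^ r * f (0 + ∑ i, ε i • c i) := mul_le_mul_of_nonneg_left hle hA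
    _ = _ := by simp [f, Finset.sum_apply]

end HilbertValued

section Multilinear

theorem sum_fin_succ_arrow {α M : Type*} [Fintype α] [AddCommMonoid M] {m : ℕ}
    (f : (Fin (m + 1) → α) → M) : ∑ i, f i = ∑ a, ∑ i : Fin m → α, f (Fin.cons a i) := by
  rw [← Fintype.sum_prod_type', ← (Fin.consEquiv fun _ => α).sum_comp]
  rfl

theorem cons_single {n m : ℕ} (a : Fin n) (i : Fin m → Fin n) :
    (fun k => Pi.single ((Fin.cons a i : Fin (m + 1) → Fin n) k) 1 : Fin (m + 1) → Fin n → ℝ)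
      = Fin.cons (Pi.single a 1) fun k => Pi.single (i k) 1 := by
  funext k
  cases k using Fin.cases <;> rfl

theorem map_eq_sum_single {n : ℕ} {M : Type*} [AddCommMonoid M] [Module ℝ M]
    (T : (Fin n → ℝ) →ₗ[ℝ] M) (x : Fin n → ℝ) : T x = ∑ a, x a • T (Pi.single a 1) := by
  conv_lhs => rw [pi_eq_sum_univ' x, map_sum]
  simp only [map_smul]

theorem exists_cube_sum_rpow_le {κ ι : Type*} [Fintype κ] [Fintype ι] {r : ℝ} (hr : 0 < r)
    {n : ℕ} (m : ℕ) (T : κ → ι → MultilinearMap ℝ (fun _ : Fin m => (Fin n → ℝ)) ℝ) :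
    ∃ y : Fin m → Fin n → ℝ, (∀ k i, |y k i| ≤ 1) ∧
      ∑ a, (∑ j, ∑ i : Fin m → Fin n, T a j (fun k => Pi.single (i k) 1) ^ 2) ^ (r / 2)
        ≤ (khintchineA r ^ r) ^ m * ∑ a, (∑ j, T a j y ^ 2) ^ (r / 2) := by
  have hA : 0 ≤ khintchineA r ^ r := rpow_nonneg (khintchineA_nonneg r) r
  induction m generalizing ι with
  | zero =>
    refine ⟨0, fun k => k.elim0, le_of_eq ?_⟩
    simp only [Fintype.sum_unique, pow_zero, one_mul, Subsingleton.elim _ (0 : Fin 0 → Fin n → ℝ)]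
  | succ m ih =>
    obtain ⟨y, hy, hle⟩ := ih fun a (j : ι × Fin n) => (T a j.1).curryLeft (Pi.single j.2 1)
    obtain ⟨ε, hε, hle'⟩ := exists_signs_sum_rpow_le hr
      fun i a j => (T a j).curryLeft (Pi.single i 1) y
    have hexpand : ∀ a j, ∑ i, ε i * (T a j).curryLeft (Pi.single i 1) y
        = T a j (Fin.cons ε y) := fun a j => by
      rw [← MultilinearMap.curryLeft_apply, map_eq_sum_single (T a j).curryLeft ε, sum_apply]
      rfl
    refine ⟨Fin.cons ε y, Fin.cases hε hy, ?_⟩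
    simp only [Fintype.sum_prod_type, MultilinearMap.curryLeft_apply] at hle
    simp only [hexpand] at hle'
    simp only [sum_fin_succ_arrow, cons_single, pow_succ (khintchineA r ^ r), mul_assoc]
    exact hle.trans (mul_le_mul_of_nonneg_left hle' (by positivity))

theorem abs_le_one_of_linfNorm_le {n : ℕ} {x : Fin n → ℝ} (h : linfNorm x ≤ 1) (i : Fin n) :
    |x i| ≤ 1 :=
  (le_ciSup (f := fun i => |x i|) (Set.finite_range _).bddAbove i).trans h

theorem abs_le_lpNorm {n : ℕ} {p : ℝ} (hp : 0 < p) (x : Fin n → ℝ) (i : Fin n) :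
    |x i| ≤ lpNorm p x := by
  rw [_root_.lpNorm, one_div, le_rpow_inv_iff_of_pos (abs_nonneg _) (by positivity) hp]
  exact Finset.single_le_sum (f := fun i => |x i| ^ p) (fun i _ => by positivity)
    (Finset.mem_univ i)

theorem abs_multilinear_le {n m : ℕ} (T : MultilinearMap ℝ (fun _ : Fin m => (Fin n → ℝ)) ℝ)
    {y : Fin m → Fin n → ℝ} (hy : ∀ k i, |y k i| ≤ 1) :
    |T y| ≤ ∑ i : Fin m → Fin n, |T fun k => Pi.single (i k) 1| := by
  have hy' : y = fun k => ∑ i, y k i • (Pi.single i 1 : Fin n → ℝ) :=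
    funext fun k => pi_eq_sum_univ' (y k)
  rw [hy', MultilinearMap.map_sum]
  refine (Finset.abs_sum_le_sum_abs _ _).trans (Finset.sum_le_sum fun i _ => ?_)
  rw [MultilinearMap.map_smul_univ, smul_eq_mul, abs_mul, Finset.abs_prod]
  exact mul_le_of_le_one_left (abs_nonneg _)
    (Finset.prod_le_one (fun k _ => abs_nonneg _) fun k _ => hy k _)

variable {p : ℝ} {N n m : ℕ}
  (T : (Fin N → ℝ) →ₗ[ℝ] MultilinearMap ℝ (fun _ : Fin m => (Fin n → ℝ)) ℝ)

theorem bddAbove_multiOpNorm (hp : 0 < p) :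
    BddAbove {c : ℝ | ∃ (x : Fin N → ℝ) (y : Fin m → (Fin n → ℝ)),
      lpNorm p x ≤ 1 ∧ (∀ k, linfNorm (y k) ≤ 1) ∧ c = |T x y|} := by
  refine ⟨∑ a, ∑ i : Fin m → Fin n, |T (Pi.single a 1) fun k => Pi.single (i k) 1|, ?_⟩
  rintro c ⟨x, y, hx, hy, rfl⟩
  rw [map_eq_sum_single T x, sum_apply]
  refine (Finset.abs_sum_le_sum_abs _ _).trans (Finset.sum_le_sum fun a _ => ?_)
  rw [smul_apply, smul_eq_mul, abs_mul]
  refine (mul_le_of_le_one_left (abs_nonneg _) ((abs_le_lpNorm hp x a).trans hx)).trans ?_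
  exact abs_multilinear_le _ fun k i => abs_le_one_of_linfNorm_le (hy k) i

theorem abs_le_multiOpNorm (hp : 0 < p) {x : Fin N → ℝ} {y : Fin m → Fin n → ℝ}
    (hx : lpNorm p x ≤ 1) (hy : ∀ k i, |y k i| ≤ 1) : |T x y| ≤ multiOpNorm p T :=
  le_csSup (bddAbove_multiOpNorm T hp)
    ⟨x, y, hx, fun k => Real.iSup_le (hy k) zero_le_one, rfl⟩

theorem exists_lpNorm_le_one_sum_mul_eq {r : ℝ} (hpr : r.HolderConjugate p) (f : Fin N → ℝ) :
    ∃ x : Fin N → ℝ, lpNorm p x ≤ 1 ∧ ∑ a, x a * f a = (∑ a, |f a| ^ r) ^ (1 / r) := by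
  obtain ⟨g, hg, hgf⟩ := (NNReal.isGreatest_Lp Finset.univ (fun a => ‖f a‖₊) hpr).1
  have hp : 0 < p := hpr.symm.pos
  have hsign : ∀ t : ℝ, |(SignType.sign t : ℝ)| ≤ 1 := fun t => by
    rcases lt_trichotomy t 0 with h | h | h <;> simp [h]
  refine ⟨fun a => SignType.sign (f a) * g a, ?_, ?_⟩
  · have hg' : ∑ a, (g a : ℝ) ^ p ≤ 1 := by exact_mod_cast hg
    refine rpow_le_one (by positivity) (le_trans ?_ hg') (by positivity)
    gcongr with a
    rw [abs_mul, NNReal.abs_eq]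
    exact mul_le_of_le_one_left (g a).2 (hsign _)
  · have h := congrArg NNReal.toReal hgf
    push_cast at h
    simp only [norm_eq_abs] at h
    rw [← h]
    simp only [mul_right_comm _ _ (f _), sign_mul_self]

theorem Lp_le_multiOpNorm {r : ℝ} (hpr : r.HolderConjugate p) {y : Fin m → Fin n → ℝ}
    (hy : ∀ k i, |y k i| ≤ 1) : (∑ a, |T (Pi.single a 1) y| ^ r) ^ (1 / r) ≤ multiOpNorm p T := by
  obtain ⟨x, hx, hxT⟩ := exists_lpNorm_le_one_sum_mul_eq hpr fun a => T (Pi.single a 1) y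
  have hTx : T x y = ∑ a, x a * T (Pi.single a 1) y := by
    rw [map_eq_sum_single T x, sum_apply]; rfl
  rw [← hxT, ← hTx]
  exact (le_abs_self _).trans (abs_le_multiOpNorm T hpr.symm.pos hx hy)

end Multilinear

end Khintchine

theorem multilinear_mixed_littlewood_general (m N n : ℕ) (p : ℝ) (hp : 1 < p)
    (T : (Fin N → ℝ) →ₗ[ℝ] MultilinearMap ℝ (fun _ : Fin m => (Fin n → ℝ)) ℝ) :
    (∑ i₁ : Fin N, (∑ i : Fin m → Fin n,
        |T (Pi.single i₁ 1) (fun k => Pi.single (i k) 1)| ^ (2 : ℝ))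
          ^ ((1 / 2) * (p / (p - 1)))) ^ ((p - 1) / p)
      ≤ khintchineA (p / (p - 1)) ^ m * multiOpNorm p T := by
  have hconj : (p / (p - 1)).HolderConjugate p := (Real.HolderConjugate.conjExponent hp).symm
  rw [← one_div_div p]
  generalize p / (p - 1) = r at hconj ⊢
  have hr : 0 < r := hconj.pos
  have hA : 0 ≤ khintchineA r := Khintchine.khintchineA_nonneg r
  obtain ⟨y, hy, hle⟩ := Khintchine.exists_cube_sum_rpow_le hr m (ι := Unit)
    fun a _ => T (Pi.single a 1)
  simp only [Fintype.sum_unique, Khintchine.sq_rpow_half] at hle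
  simp only [rpow_two, sq_abs, one_div_mul_eq_div]
  calc _ ≤ ((khintchineA r ^ r) ^ m * ∑ a, |T (Pi.single a 1) y| ^ r) ^ (1 / r) := by gcongr
    _ = khintchineA r ^ m * (∑ a, |T (Pi.single a 1) y| ^ r) ^ (1 / r) := by
        rw [mul_rpow (by positivity) (by positivity), rpow_pow_comm hA, one_div,
          rpow_rpow_inv (by positivity) hr.ne']
    _ ≤ _ := by
        gcongr
        exact Khintchine.Lp_le_multiOpNorm T hconj hy

/-- Multilinear mixed `(ℓ_{p/(p-1)}, ℓ₂)`-Littlewood inequality with constant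
`(A_{p/(p-1)})^{M-1}`, for an `M`-linear form with `M = m + 1 ≥ 3`. -/
theorem multilinear_mixed_littlewood (m : ℕ) (hm : 2 ≤ m) (p : ℝ) (hp : 2 ≤ p) (n : ℕ)
    (T : (Fin n → ℝ) →ₗ[ℝ] MultilinearMap ℝ (fun _ : Fin m => (Fin n → ℝ)) ℝ) :
    (∑ i₁ : Fin n, (∑ i : Fin m → Fin n,
        |T (Pi.single i₁ 1) (fun k => Pi.single (i k) 1)| ^ (2 : ℝ))
          ^ ((1 / 2) * (p / (p - 1)))) ^ ((p - 1) / p)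
      ≤ khintchineA (p / (p - 1)) ^ m * multiOpNorm p T :=
  multilinear_mixed_littlewood_general m n n p (one_lt_two.trans_le hp) T
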